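/- For every n ≥ 8, every finite chiral n-polytope has at least 48(n−2)·(n−2)! flags. -/

import Mathlib

open scoped Classical

/-- An abstract polytope of rank `n`: a partially ordered set with a unique minimal
element (of rank `-1`) and a unique maximal element (of rank `n`), all of whose
maximal chains (flags) have exactly `n + 2` elements, equipped with the induced
rank function, satisfying the diamond condition and strong connectivity. -/
structure AbstractPolytope (n : ℕ) where
  Face : Type
  [instPartialOrder : PartialOrder Face]
  rank : Face → ℤ
  bot : Face
  top : Face
  bot_le : ∀ F : Face, bot ≤ F
  le_top : ∀ F : Face, F ≤ top
  rank_bot : rank bot = -1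
  rank_top : rank top = n
  rank_strictMono : ∀ F G : Face, F < G → rank F < rank G
  flag_card : ∀ Φ : Flag Face, Nat.card Φ = n + 2
  flag_ranks : ∀ (Φ : Flag Face) (j : ℤ), -1 ≤ j → j ≤ (n : ℤ) →
    ∃ F ∈ Φ, rank F = j
  diamond : ∀ F G : Face, F < G → rank G = rank F + 2 →
    Nat.card {H : Face // F < H ∧ H < G} = 2
  strongly_connected : ∀ F G : Face, F < G → rank F + 3 ≤ rank G →
    ∀ H H' : Face, F < H → H < G → F < H' → H' < G →
    Relation.ReflTransGen
      (fun A B : Face => F < A ∧ A < G ∧ F < B ∧ B < G ∧ (A ≤ B ∨ B ≤ A)) H H'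

attribute [instance] AbstractPolytope.instPartialOrder

namespace AbstractPolytope

variable {n : ℕ} (P : AbstractPolytope n)

/-- The number of flags of `P`. -/
noncomputable def numFlags : ℕ := Nat.card (Flag P.Face)

/-- A vertex is a face of rank `0`. -/
def IsVertex (F : P.Face) : Prop := P.rank F = 0

/-- A facet is a face of rank `n - 1`. -/
def IsFacet (F : P.Face) : Prop := P.rank F = (n : ℤ) - 1

/-- The number of vertices of `P`. -/
noncomputable def numVertices : ℕ := Nat.card {F : P.Face // P.IsVertex F}

/-- The number of facets of `P`. -/
noncomputable def numFacets : ℕ := Nat.card {F : P.Face // P.IsFacet F}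

/-- Two faces are incident when they are comparable. -/
def Incident (F G : P.Face) : Prop := F ≤ G ∨ G ≤ F

/-- `P` is `(k, m)`-flat when every face of rank `k` is incident with every face of
rank `m`. -/
def IsKMFlat (k m : ℤ) : Prop :=
  ∀ F G : P.Face, P.rank F = k → P.rank G = m → P.Incident F G

/-- `P` is flat when every vertex is incident with every facet. -/
def IsFlat : Prop := P.IsKMFlat 0 ((n : ℤ) - 1)

/-- Two flags are adjacent when they differ in exactly one element. -/
def AdjacentFlags (Φ Ψ : Flag P.Face) : Prop :=
  Φ ≠ Ψ ∧ ((Φ : Set P.Face) \ (Ψ : Set P.Face)).ncard = 1 ∧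
    ((Ψ : Set P.Face) \ (Φ : Set P.Face)).ncard = 1

/-- Two flags lie in the same orbit of the automorphism group `Γ(P)` (the group of
order automorphisms of `P`). -/
def SameOrbit (Φ Ψ : Flag P.Face) : Prop :=
  ∃ f : P.Face ≃o P.Face, f '' (Φ : Set P.Face) = (Ψ : Set P.Face)

/-- `P` is regular when `Γ(P)` is transitive on flags. -/
def IsRegular : Prop := ∀ Φ Ψ : Flag P.Face, P.SameOrbit Φ Ψ

/-- `P` is chiral when its flags fall into exactly two orbits under `Γ(P)` and
adjacent flags always lie in different orbits. -/
def IsChiral : Prop :=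
  (∃ Φ₁ Φ₂ : Flag P.Face, ¬ P.SameOrbit Φ₁ Φ₂ ∧
      ∀ Φ : Flag P.Face, P.SameOrbit Φ Φ₁ ∨ P.SameOrbit Φ Φ₂) ∧
  ∀ Φ Ψ : Flag P.Face, P.AdjacentFlags Φ Ψ → ¬ P.SameOrbit Φ Ψ

/-- The polytope `Q` is (isomorphic to) the section `G/F` of `P`: there is an order
isomorphism from `Q` onto the interval `[F, G]` of `P`, shifting ranks by
`rank F + 1`. -/
def IsSection {m : ℕ} (Q : AbstractPolytope m) (F G : P.Face) : Prop :=
  F ≤ G ∧ ∃ e : Q.Face ≃o (Set.Icc F G),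
    ∀ x : Q.Face, P.rank (e x : P.Face) = Q.rank x + P.rank F + 1

/-- `P` is equivelar of Schläfli type `{p 1, …, p (n-1)}`: every section between a
face of rank `i - 2` and a face of rank `i + 1` is a polygon with exactly `p i`
vertices (i.e. it contains exactly `p i` faces of rank `i - 1`). -/
def IsSchlafli (p : ℕ → ℕ) : Prop :=
  ∀ i : ℕ, 1 ≤ i → i ≤ n - 1 →
    ∀ F G : P.Face, F < G → P.rank F = (i : ℤ) - 2 → P.rank G = (i : ℤ) + 1 →
      Nat.card {H : P.Face // F < H ∧ H < G ∧ P.rank H = (i : ℤ) - 1} = p i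

/-- `P` is tight of type `{p 1, …, p (n-1)}`: it is equivelar of that type and has
exactly `2 p₁ ⋯ p_{n-1}` flags. -/
def IsTight (p : ℕ → ℕ) : Prop :=
  P.IsSchlafli p ∧ P.numFlags = 2 * ∏ i ∈ Finset.Icc 1 (n - 1), p i

end AbstractPolytope

/-!
The involutions exchanging adjacent flags generate a group acting transitively on the flags of a
polytope. Chirality forces this action to be non-free, and the section on which freeness first fails
cannot be flat: a flat section is an amalgamation of its facet and its vertex-figure, and freeness
would pass from these to the section. Non-flatness makes the numbers of vertices and of facets grow
strictly with the rank, so counting flags one rank at a time yields factorial lower bounds. The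
constant 48 comes from sharper counts in low ranks.
-/

open Equiv

section IntervalSubgroup

variable {Γ : Type*} [Group Γ] {r : ℕ → Γ} {i j k : ℕ}

/-- The subgroup generated by the `r k` with `i ≤ k < j`; for the connection group of a polytope
it is the group of the sections between faces of ranks `i - 1` and `j`. -/
def intervalSubgroup (r : ℕ → Γ) (i j : ℕ) : Subgroup Γ :=
  Subgroup.closure (r '' Set.Ico i j)

theorem mem_intervalSubgroup (r : ℕ → Γ) (hik : i ≤ k) (hkj : k < j) :
    r k ∈ intervalSubgroup r i j :=
  Subgroup.subset_closure ⟨k, ⟨hik, hkj⟩, rfl⟩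

theorem intervalSubgroup_mono (r : ℕ → Γ) {i' j' : ℕ} (hi : i' ≤ i) (hj : j ≤ j') :
    intervalSubgroup r i j ≤ intervalSubgroup r i' j' :=
  Subgroup.closure_mono (Set.image_mono (Set.Ico_subset_Ico hi hj))

theorem intervalSubgroup_eq_bot (r : ℕ → Γ) (h : j ≤ i) : intervalSubgroup r i j = ⊥ := by
  rw [intervalSubgroup, Set.Ico_eq_empty (by omega), Set.image_empty, Subgroup.closure_empty]

theorem intervalSubgroup_induction_left (hinv : ∀ k, i ≤ k → k < j → r k * r k = 1) {p : Γ → Prop}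
    (one : p 1)
    (mul : ∀ k, i ≤ k → k < j → ∀ g ∈ intervalSubgroup r i j, p g → p (r k * g)) :
    ∀ g ∈ intervalSubgroup r i j, p g := by
  intro g hg
  induction hg using Subgroup.closure_induction_left with
  | one => exact one
  | mul_left x hx y hy ih =>
    obtain ⟨k, ⟨hik, hkj⟩, rfl⟩ := hx
    exact mul k hik hkj y hy ih
  | inv_mul_cancel x hx y hy ih =>
    obtain ⟨k, ⟨hik, hkj⟩, rfl⟩ := hx
    rw [inv_eq_of_mul_eq_one_left (hinv k hik hkj)]
    exact mul k hik hkj y hy ih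

theorem intervalSubgroup_induction_right (hinv : ∀ k, i ≤ k → k < j → r k * r k = 1)
    {p : Γ → Prop} (one : p 1)
    (mul : ∀ k, i ≤ k → k < j → ∀ g ∈ intervalSubgroup r i j, p g → p (g * r k)) :
    ∀ g ∈ intervalSubgroup r i j, p g := by
  intro g hg
  have key : ∀ g ∈ intervalSubgroup r i j, p g⁻¹ := by
    refine intervalSubgroup_induction_left hinv (by simpa using one) fun k hik hkj g hg ih ↦ ?_
    rw [mul_inv_rev, inv_eq_of_mul_eq_one_left (hinv k hik hkj)]
    exact mul k hik hkj _ (inv_mem hg) ih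
  simpa using key g⁻¹ (inv_mem hg)

theorem commute_of_mem_intervalSubgroup {f g : Γ} (hf : ∀ k, i ≤ k → k < j → Commute f (r k))
    (hg : g ∈ intervalSubgroup r i j) : Commute f g := by
  have hle : intervalSubgroup r i j ≤ Subgroup.centralizer {f} := by
    rw [intervalSubgroup, Subgroup.closure_le]
    rintro _ ⟨k, ⟨hik, hkj⟩, rfl⟩
    exact Subgroup.mem_centralizer_singleton_iff.2 (hf k hik hkj).symm
  exact (Subgroup.mem_centralizer_singleton_iff.1 (hle hg)).symm

theorem intervalSubgroup_reflect (r : ℕ → Γ) {n : ℕ} (hj : j ≤ n) :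
    intervalSubgroup (fun k ↦ r (n - 1 - k)) i j = intervalSubgroup r (n - j) (n - i) := by
  rw [intervalSubgroup, intervalSubgroup]
  congr 1
  ext g
  constructor
  · rintro ⟨k, ⟨hik, hkj⟩, rfl⟩
    exact ⟨n - 1 - k, ⟨by omega, by omega⟩, rfl⟩
  · rintro ⟨k, ⟨hjk, hki⟩, rfl⟩
    refine ⟨n - 1 - k, ⟨by omega, by omega⟩, ?_⟩
    simp only [show n - 1 - (n - 1 - k) = k by omega]

end IntervalSubgroup

theorem ncard_eq_mul_ncard_image {α β : Type*} {s : Set α} (hs : s.Finite) (f : α → β) {m : ℕ}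
    (hm : ∀ x ∈ s, {y ∈ s | f y = f x}.ncard = m) : s.ncard = m * (f '' s).ncard := by
  lift s to Finset α using hs
  rw [Set.ncard_coe_finset, ← Finset.coe_image, Set.ncard_coe_finset,
    Finset.card_eq_sum_card_image f, Finset.sum_const_nat, mul_comm]
  intro y hy
  obtain ⟨x, hx, rfl⟩ := Finset.mem_image.1 hy
  rw [← hm x hx, ← Set.ncard_coe_finset, Finset.coe_filter]
  rfl

/-- The flags of an `n`-polytope as a set `X` with the involutions `r 0, …, r (n - 1)`, where `r i`
takes a flag to the flag differing from it exactly in rank `i`; values of `r` from `n` on are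
irrelevant. The field `inter` is the intersection property that encodes the partial order. -/
structure FlagSystem (n : ℕ) (X : Type*) where
  r : ℕ → Perm X
  base : X
  r_mul_self : ∀ i < n, r i * r i = 1
  r_ne : ∀ i < n, ∀ x, r i x ≠ x
  comm : ∀ i j, i + 2 ≤ j → j < n → Commute (r i) (r j)
  inter : ∀ i j i' j', j ≤ n → j' ≤ n → ∀ x : X,
    MulAction.orbit (intervalSubgroup r i j) x ∩ MulAction.orbit (intervalSubgroup r i' j') x ⊆
      MulAction.orbit (intervalSubgroup r (max i i') (min j j')) x
  trans : ∀ x y : X, y ∈ MulAction.orbit (intervalSubgroup r 0 n) x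

namespace FlagSystem

variable {n : ℕ} {X : Type*} (S : FlagSystem n X) {i j k l : ℕ} {x y z : X}

/-- The group of the sections of `S` between faces of ranks `i - 1` and `j`. -/
abbrev group (i j : ℕ) : Subgroup (Perm X) := intervalSubgroup S.r i j

/-- The flags that agree with `x` in all ranks outside `[i, j)`, that is, the flags of the section
between the faces of ranks `i - 1` and `j` of `x`. -/
def orbit (i j : ℕ) (x : X) : Set X := MulAction.orbit (S.group i j) x

/-- Two flags are equivalent under an automorphism, i.e. a permutation of the flags that commutes
with all adjacency involutions. -/
def SameOrbit (x y : X) : Prop := ∃ f : Perm X, (∀ i < n, Commute f (S.r i)) ∧ f x = y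

/-- The flags form two automorphism classes that every adjacency involution exchanges. -/
class IsChiral : Prop where
  not_sameOrbit_r : ∀ i < n, ∀ x, ¬ S.SameOrbit x (S.r i x)
  sameOrbit_or : ∀ i < n, ∀ x y, S.SameOrbit x y ∨ S.SameOrbit x (S.r i y)

/-- The number of flags of a section between faces of ranks `i - 1` and `j`. -/
noncomputable def numFlags (i j : ℕ) : ℕ := (S.orbit i j S.base).ncard

/-- The number of vertices (faces of rank `i`) of a section between faces of ranks `i - 1` and `j`.
Since all flags of the section agree below rank `i`, a vertex is encoded as an orbit of
`r (i + 1), …, r (n - 1)`. -/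
noncomputable def numVertices (i j : ℕ) : ℕ := (S.orbit (i + 1) n '' S.orbit i j S.base).ncard

/-- The number of facets (faces of rank `j - 1`) of a section between faces of ranks `i - 1` and
`j`, a facet being encoded as an orbit of `r 0, …, r (j - 2)`. -/
noncomputable def numFacets (i j : ℕ) : ℕ := (S.orbit 0 (j - 1) '' S.orbit i j S.base).ncard

theorem mem_orbit : y ∈ S.orbit i j x ↔ ∃ g ∈ S.group i j, g x = y := by
  simp [orbit, MulAction.mem_orbit_iff, Subgroup.smul_def]

theorem apply_mem_orbit {g : Perm X} (hg : g ∈ S.group i j) (x : X) : g x ∈ S.orbit i j x :=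
  S.mem_orbit.2 ⟨g, hg, rfl⟩

theorem r_mem_orbit (hik : i ≤ k) (hkj : k < j) (x : X) : S.r k x ∈ S.orbit i j x :=
  S.apply_mem_orbit (mem_intervalSubgroup _ hik hkj) x

theorem mem_orbit_self (i j : ℕ) (x : X) : x ∈ S.orbit i j x := MulAction.mem_orbit_self x

theorem orbit_eq_iff : S.orbit i j x = S.orbit i j y ↔ x ∈ S.orbit i j y :=
  MulAction.orbit_eq_iff

variable {S} in
theorem mem_orbit_symm (h : y ∈ S.orbit i j x) : x ∈ S.orbit i j y :=
  MulAction.mem_orbit_symm.1 h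

variable {S} in
theorem mem_orbit_trans (hxy : y ∈ S.orbit i j x) (hyz : z ∈ S.orbit i j y) :
    z ∈ S.orbit i j x := by
  rwa [S.orbit_eq_iff.2 hxy] at hyz

theorem orbit_mono {i' j' : ℕ} (hi : i' ≤ i) (hj : j ≤ j') (x : X) :
    S.orbit i j x ⊆ S.orbit i' j' x := by
  intro y hy
  obtain ⟨g, hg, rfl⟩ := S.mem_orbit.1 hy
  exact S.apply_mem_orbit (intervalSubgroup_mono _ hi hj hg) x

theorem orbit_of_le (h : j ≤ i) (x : X) : S.orbit i j x = {x} := by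
  ext y
  simp [S.mem_orbit, intervalSubgroup_eq_bot S.r h, eq_comm]

theorem orbit_inter {i' j' a b : ℕ} (hj : j ≤ n) (hj' : j' ≤ n) (hy : y ∈ S.orbit i j x)
    (hy' : y ∈ S.orbit i' j' x) (ha : a = max i i') (hb : b = min j j') : y ∈ S.orbit a b x := by
  subst ha hb
  exact S.inter i j i' j' hj hj' x ⟨hy, hy'⟩

theorem r_r (hi : i < n) (x : X) : S.r i (S.r i x) = x :=
  DFunLike.congr_fun (S.r_mul_self i hi) x

theorem r_inv (hi : i < n) : (S.r i)⁻¹ = S.r i := inv_eq_of_mul_eq_one_left (S.r_mul_self i hi)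

theorem group_induction_left (hj : j ≤ n) {p : Perm X → Prop} (one : p 1)
    (mul : ∀ k, i ≤ k → k < j → ∀ g ∈ S.group i j, p g → p (S.r k * g)) : ∀ g ∈ S.group i j, p g :=
  intervalSubgroup_induction_left (fun k _ hk ↦ S.r_mul_self k (by omega)) one mul

theorem group_induction_right (hj : j ≤ n) {p : Perm X → Prop} (one : p 1)
    (mul : ∀ k, i ≤ k → k < j → ∀ g ∈ S.group i j, p g → p (g * S.r k)) : ∀ g ∈ S.group i j, p g :=
  intervalSubgroup_induction_right (fun k _ hk ↦ S.r_mul_self k (by omega)) one mul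

theorem commute_r (hi : i < n) (hj : j < n) (h : i + 2 ≤ j ∨ j + 2 ≤ i) :
    Commute (S.r i) (S.r j) :=
  h.elim (fun h ↦ S.comm i j h hj) fun h ↦ (S.comm j i h hi).symm

theorem commute_of_mem_group {a b c d : ℕ} (hbc : b < c) (hd : d ≤ n) {g h : Perm X}
    (hg : g ∈ S.group a b) (hh : h ∈ S.group c d) : Commute g h :=
  commute_of_mem_intervalSubgroup (fun _ _ _ ↦ Commute.symm <|
    commute_of_mem_intervalSubgroup
      (fun _ _ _ ↦ S.commute_r (by omega) (by omega) (by omega)) hg) hh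

theorem orbit_succ (hi : i < n) (x : X) : S.orbit i (i + 1) x = {x, S.r i x} := by
  ext y
  rw [S.mem_orbit]
  constructor
  · rintro ⟨g, hg, rfl⟩
    revert g
    refine S.group_induction_left (by omega) (Or.inl rfl) fun k hik hki g _ ih ↦ ?_
    obtain rfl : k = i := by omega
    rcases ih with ih | ih
    · exact Or.inr (congrArg _ ih)
    · exact Or.inl (by rw [Perm.mul_apply, ih, S.r_r hi])
  · rintro (rfl | rfl)
    · exact ⟨1, one_mem _, rfl⟩
    · exact ⟨S.r i, mem_intervalSubgroup _ le_rfl (by omega), rfl⟩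

theorem setOf_orbit_eq_orbit {i' j' a b : ℕ} (hj : j ≤ n) (hj' : j' ≤ n) (ha : a = max i i')
    (hb : b = min j j') (hy : y ∈ S.orbit i j x) :
    {z ∈ S.orbit i j x | S.orbit i' j' z = S.orbit i' j' y} = S.orbit a b y := by
  ext z
  constructor
  · rintro ⟨hz, hzy⟩
    exact S.orbit_inter hj hj' (mem_orbit_trans (mem_orbit_symm hy) hz) (S.orbit_eq_iff.1 hzy) ha hb
  · intro hz
    exact ⟨mem_orbit_trans hy (S.orbit_mono (by omega) (by omega) _ hz),
      S.orbit_eq_iff.2 (S.orbit_mono (by omega) (by omega) _ hz)⟩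

section SameOrbit

variable {S}

theorem SameOrbit.symm (h : S.SameOrbit x y) : S.SameOrbit y x := by
  obtain ⟨f, hf, rfl⟩ := h
  exact ⟨f⁻¹, fun i hi ↦ (hf i hi).inv_left, by simp⟩

theorem SameOrbit.trans (hxy : S.SameOrbit x y) (hyz : S.SameOrbit y z) : S.SameOrbit x z := by
  obtain ⟨f, hf, rfl⟩ := hxy
  obtain ⟨g, hg, rfl⟩ := hyz
  exact ⟨g * f, fun i hi ↦ (hg i hi).mul_left (hf i hi), rfl⟩

theorem apply_comm_of_commute {f g : Perm X} (hf : ∀ i < n, Commute f (S.r i)) (hj : j ≤ n)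
    (hg : g ∈ S.group i j) (x : X) : f (g x) = g (f x) :=
  DFunLike.congr_fun
    (commute_of_mem_intervalSubgroup (fun k _ hk ↦ hf k (by omega)) hg) x

theorem image_orbit_of_commute {f : Perm X} (hf : ∀ i < n, Commute f (S.r i)) (hj : j ≤ n)
    (x : X) : f '' S.orbit i j x = S.orbit i j (f x) := by
  ext y
  simp only [Set.mem_image, S.mem_orbit]
  constructor
  · rintro ⟨_, ⟨g, hg, rfl⟩, rfl⟩
    exact ⟨g, hg, (apply_comm_of_commute hf hj hg x).symm⟩
  · rintro ⟨g, hg, rfl⟩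
    exact ⟨g x, ⟨g, hg, rfl⟩, apply_comm_of_commute hf hj hg x⟩

end SameOrbit

section Chiral

variable [S.IsChiral]

theorem sameOrbit_r_r (hk : k < n) (hl : l < n) (x : X) : S.SameOrbit x (S.r k (S.r l x)) :=
  (IsChiral.sameOrbit_or k hk x (S.r l x)).resolve_left (IsChiral.not_sameOrbit_r l hl x)

theorem sameOrbit_refl (hi : i < n) (x : X) : S.SameOrbit x x := by
  simpa only [S.r_r hi] using S.sameOrbit_r_r hi hi x

theorem exists_mem_orbit_sameOrbit (hik : i ≤ k) (hkj : k < j) (hj : j ≤ n) (x y : X) :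
    ∃ z ∈ S.orbit i j x, S.SameOrbit y z :=
  (IsChiral.sameOrbit_or k (hkj.trans_le hj) y x).elim
    (fun h ↦ ⟨x, S.mem_orbit_self i j x, h⟩) fun h ↦ ⟨_, S.r_mem_orbit hik hkj x, h⟩

end Chiral

section Counting

theorem numFlags_of_le (h : j ≤ i) : S.numFlags i j = 1 := by
  rw [numFlags, S.orbit_of_le h, Set.ncard_singleton]

theorem numFlags_succ (hi : i < n) : S.numFlags i (i + 1) = 2 := by
  rw [numFlags, S.orbit_succ hi, Set.ncard_pair (S.r_ne i hi _).symm]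

theorem numFlags_pos [Finite X] (i j : ℕ) : 0 < S.numFlags i j :=
  (Set.ncard_pos).2 ⟨_, S.mem_orbit_self i j S.base⟩

variable [S.IsChiral]

theorem ncard_orbit (hj : j ≤ n) (x : X) : (S.orbit i j x).ncard = S.numFlags i j := by
  rcases lt_or_ge i j with hij | hij
  · obtain ⟨y, hy, f, hf, rfl⟩ := S.exists_mem_orbit_sameOrbit le_rfl hij hj x S.base
    rw [← S.orbit_eq_iff.2 hy, ← image_orbit_of_commute hf hj, numFlags,
      Set.ncard_image_of_injective _ f.injective]
  · simp only [numFlags, S.orbit_of_le hij, Set.ncard_singleton]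

variable [Finite X]

theorem numFlags_eq_mul_ncard_image {i' j' a b : ℕ} (hj : j ≤ n) (hj' : j' ≤ n) (ha : a = max i i')
    (hb : b = min j j') (x : X) :
    S.numFlags i j = S.numFlags a b * (S.orbit i' j' '' S.orbit i j x).ncard := by
  rw [← S.ncard_orbit hj x]
  refine ncard_eq_mul_ncard_image (Set.toFinite _) _ fun y hy ↦ ?_
  rw [S.setOf_orbit_eq_orbit hj hj' ha hb hy, S.ncard_orbit (by omega)]

theorem numFlags_eq_numVertices_mul (hj : j ≤ n) :
    S.numFlags i j = S.numVertices i j * S.numFlags (i + 1) j := by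
  rw [mul_comm]
  exact S.numFlags_eq_mul_ncard_image hj le_rfl (by omega) (by omega) S.base

theorem numFlags_eq_numFacets_mul (hj : j ≤ n) :
    S.numFlags i j = S.numFacets i j * S.numFlags i (j - 1) := by
  rw [mul_comm]
  exact S.numFlags_eq_mul_ncard_image hj (by omega) (by omega) (by omega) S.base

theorem ncard_vertices (hj : j ≤ n) (x : X) :
    (S.orbit (i + 1) n '' S.orbit i j x).ncard = S.numVertices i j :=
  Nat.eq_of_mul_eq_mul_left (S.numFlags_pos (i + 1) j)
    ((S.numFlags_eq_mul_ncard_image hj le_rfl (by omega) (by omega) x).symm.trans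
      ((S.numFlags_eq_numVertices_mul hj).trans (mul_comm _ _)))

theorem ncard_vertices_section (hj : j ≤ n) (x : X) :
    (S.orbit (i + 1) j '' S.orbit i j x).ncard = S.numVertices i j :=
  Nat.eq_of_mul_eq_mul_left (S.numFlags_pos (i + 1) j)
    ((S.numFlags_eq_mul_ncard_image hj hj (by omega) (by omega) x).symm.trans
      ((S.numFlags_eq_numVertices_mul hj).trans (mul_comm _ _)))

theorem numVertices_succ (hi : i < n) : S.numVertices i (i + 1) = 2 := by
  have h := S.numFlags_eq_numVertices_mul (i := i) (j := i + 1) hi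
  rw [S.numFlags_succ hi, S.numFlags_of_le le_rfl] at h
  omega

end Counting

/-- The section between faces of ranks `i - 1` and `j` is flat: each of its vertices is incident
with each of its facets. -/
def IsFlat (i j : ℕ) : Prop :=
  ∀ x, ∀ y ∈ S.orbit i j x, ∃ z ∈ S.orbit (i + 1) j x, y ∈ S.orbit i (j - 1) z

section VertexGrowth

variable [Finite X]

theorem numVertices_mono (h : j ≤ k) : S.numVertices i j ≤ S.numVertices i k :=
  Set.ncard_le_ncard (Set.image_mono (S.orbit_mono le_rfl h _))

theorem numVertices_lt_succ [S.IsChiral] (hj : j + 1 ≤ n) (hflat : ¬ S.IsFlat i (j + 1)) :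
    S.numVertices i j < S.numVertices i (j + 1) := by
  simp only [IsFlat, not_forall, not_exists, not_and] at hflat
  obtain ⟨x, y, hxy, hno⟩ := hflat
  rw [← S.ncard_vertices (by omega) y, ← S.ncard_vertices hj y]
  refine Set.ncard_lt_ncard ⟨Set.image_mono (S.orbit_mono le_rfl (by omega) _), fun hsub ↦ ?_⟩
  obtain ⟨z, hz, hzx⟩ := hsub ⟨x, mem_orbit_symm hxy, rfl⟩
  have hzx' : z ∈ S.orbit i (j + 1) x :=
    mem_orbit_trans hxy (S.orbit_mono le_rfl (by omega) _ hz)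
  exact hno z (S.orbit_inter le_rfl hj (S.orbit_eq_iff.1 hzx) hzx' (by omega) (by omega))
    (mem_orbit_symm hz)

end VertexGrowth

section Dual

/-- The dual flag system, in which ranks are reversed. -/
def dual : FlagSystem n X where
  r k := S.r (n - 1 - k)
  base := S.base
  r_mul_self i hi := S.r_mul_self _ (by omega)
  r_ne i hi := S.r_ne _ (by omega)
  comm i j hij hj := (S.comm (n - 1 - j) (n - 1 - i) (by omega) (by omega)).symm
  inter i j i' j' hj hj' x := by
    rw [intervalSubgroup_reflect S.r hj, intervalSubgroup_reflect S.r hj',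
      intervalSubgroup_reflect S.r (by omega), show n - min j j' = max (n - j) (n - j') by omega,
      show n - max i i' = min (n - i) (n - i') by omega]
    exact S.inter _ _ _ _ (by omega) (by omega) x
  trans x y := by
    rw [intervalSubgroup_reflect S.r le_rfl, Nat.sub_self, Nat.sub_zero]
    exact S.trans x y

variable {a b : ℕ}

theorem dual_r (h : k + l + 1 = n) : S.dual.r k = S.r l :=
  congrArg S.r (by omega)

theorem dual_group (ha : a + j = n) (hb : b + i = n) : S.dual.group a b = S.group i j := by
  refine (intervalSubgroup_reflect S.r (by omega)).trans ?_
  rw [show n - b = i by omega, show n - a = j by omega]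

theorem dual_orbit (ha : a + j = n) (hb : b + i = n) (x : X) :
    S.dual.orbit a b x = S.orbit i j x := by
  rw [orbit, S.dual_group ha hb, orbit]

theorem dual_numFlags (ha : a + j = n) (hb : b + i = n) :
    S.dual.numFlags a b = S.numFlags i j := by
  rw [numFlags, S.dual_orbit ha hb]
  rfl

theorem dual_numVertices (ha : a + j = n) (hb : b + i = n) (hj : 1 ≤ j) :
    S.dual.numVertices a b = S.numFacets i j := by
  have horbit : S.dual.orbit (a + 1) n = S.orbit 0 (j - 1) :=
    funext fun x ↦ S.dual_orbit (by omega) (by omega) x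
  rw [numVertices, horbit, S.dual_orbit ha hb]
  rfl

theorem dual_isFlat (ha : a + j = n) (hb : b + i = n) (hi : i < n) (hj : 1 ≤ j) :
    S.dual.IsFlat a b ↔ S.IsFlat i j := by
  have hfacet : S.dual.orbit a (b - 1) = S.orbit (i + 1) j :=
    funext fun x ↦ S.dual_orbit ha (by omega) x
  have hvertex : S.dual.orbit (a + 1) b = S.orbit i (j - 1) :=
    funext fun x ↦ S.dual_orbit (by omega) hb x
  have hsection : S.dual.orbit a b = S.orbit i j := funext fun x ↦ S.dual_orbit ha hb x
  rw [IsFlat, hfacet, hvertex, hsection]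
  constructor <;> intro h x y hy <;> obtain ⟨z, hxz, hzy⟩ := h y x (mem_orbit_symm hy) <;>
    exact ⟨z, mem_orbit_symm hzy, mem_orbit_symm hxz⟩

theorem dual_sameOrbit : S.dual.SameOrbit x y ↔ S.SameOrbit x y := by
  refine exists_congr fun f ↦ and_congr_left fun _ ↦ ⟨fun h i hi ↦ ?_, fun h i hi ↦ ?_⟩
  · simpa only [S.dual_r (show n - 1 - i + i + 1 = n by omega)] using h (n - 1 - i) (by omega)
  · exact h (n - 1 - i) (by omega)

instance [S.IsChiral] : S.dual.IsChiral where
  not_sameOrbit_r i hi x := by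
    rw [dual_sameOrbit, S.dual_r (l := n - 1 - i) (by omega)]
    exact IsChiral.not_sameOrbit_r _ (by omega) x
  sameOrbit_or i hi x y := by
    rw [dual_sameOrbit, dual_sameOrbit, S.dual_r (l := n - 1 - i) (by omega)]
    exact IsChiral.sameOrbit_or _ (by omega) x y

end Dual

section ActsFreely

/-- The group of the section acts freely on the flags, as it does if the section is regular. -/
def ActsFreely (i j : ℕ) : Prop := ∀ g ∈ S.group i j, ∀ x, g x = x → g = 1

variable {S} in
theorem ActsFreely.eq {g h : Perm X} (hfree : S.ActsFreely i j) (hg : g ∈ S.group i j)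
    (hh : h ∈ S.group i j) (hx : g x = h x) : g = h := by
  refine (inv_mul_eq_one.1 (hfree _ (mul_mem (inv_mem hh) hg) x ?_)).symm
  rw [Perm.mul_apply, hx, ← Perm.mul_apply, inv_mul_cancel, Perm.one_apply]

theorem dual_actsFreely {a b : ℕ} (ha : a + j = n) (hb : b + i = n) :
    S.dual.ActsFreely a b ↔ S.ActsFreely i j := by
  rw [ActsFreely, S.dual_group ha hb, ActsFreely]

theorem eq_one_of_commute_r [S.IsChiral] (hk : k < n) {g : Perm X} (hg : g ∈ S.group 0 n)
    (hcomm : Commute (S.r k) g) (hx : g x = x) : g = 1 := by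
  have hfix : ∀ y, S.SameOrbit x y → g y = y := by
    rintro _ ⟨f, hf, rfl⟩
    rw [← apply_comm_of_commute hf le_rfl hg, hx]
  refine Perm.ext fun y ↦ ?_
  rcases IsChiral.sameOrbit_or (S := S) k hk x y with hxy | hxy
  · exact hfix y hxy
  · exact (S.r k).injective ((DFunLike.congr_fun hcomm y).trans (hfix _ hxy))

theorem actsFreely_of_add_two_le [S.IsChiral] (hj : j + 2 ≤ n) : S.ActsFreely i j :=
  fun _ hg _ ↦ S.eq_one_of_commute_r (k := n - 1) (by omega)
    (intervalSubgroup_mono _ (Nat.zero_le _) (by omega) hg)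
    (S.commute_of_mem_group (b := j) (c := n - 1) (d := n) (by omega) le_rfl hg
      (mem_intervalSubgroup _ le_rfl (by omega))).symm

theorem actsFreely_of_two_le [S.IsChiral] (hi : 2 ≤ i) (hj : j ≤ n) : S.ActsFreely i j := by
  rcases lt_or_ge i j with hij | hij
  · rw [← S.dual_actsFreely (a := n - j) (b := n - i) (by omega) (by omega)]
    exact S.dual.actsFreely_of_add_two_le (by omega)
  · rintro g hg -
    rw [group, intervalSubgroup_eq_bot _ hij, Subgroup.mem_bot] at hg
    exact fun _ ↦ hg

theorem sameOrbit_of_actsFreely (hfree : S.ActsFreely 0 n) (x y : X) : S.SameOrbit x y := by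
  have hbij : Function.Bijective fun g : S.group 0 n ↦ g.1 x := by
    refine ⟨fun g h hgh ↦ Subtype.ext (hfree.eq g.2 h.2 hgh), fun z ↦ ?_⟩
    obtain ⟨g, hg, hgz⟩ := S.mem_orbit.1 (S.trans x z)
    exact ⟨⟨g, hg⟩, hgz⟩
  let e := Equiv.ofBijective _ hbij
  have he : ∀ g (h : S.group 0 n), e (g * h) = g.1 (e h) := fun g h ↦ rfl
  obtain ⟨g, hg⟩ := e.surjective y
  refine ⟨e.symm.trans ((Equiv.mulRight g).trans e), fun i hi ↦ Perm.ext fun z ↦ ?_, ?_⟩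
  · obtain ⟨h, rfl⟩ := e.surjective z
    let s : S.group 0 n := ⟨S.r i, mem_intervalSubgroup _ (Nat.zero_le i) hi⟩
    have hs : S.r i (e h) = e (s * h) := (he s h).symm
    simp only [Perm.mul_apply, hs, Equiv.trans_apply, Equiv.symm_apply_apply, Equiv.coe_mulRight,
      mul_assoc]
    exact he s (h * g)
  · have hx : e 1 = x := rfl
    rw [← hg]
    conv_lhs => rw [← hx]
    simp only [Equiv.trans_apply, Equiv.symm_apply_apply, Equiv.coe_mulRight, one_mul]

theorem not_actsFreely [S.IsChiral] (hn : 0 < n) : ¬ S.ActsFreely 0 n := fun h ↦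
  IsChiral.not_sameOrbit_r 0 hn S.base (S.sameOrbit_of_actsFreely h _ _)

end ActsFreely

section FlatAmalgamation

theorem exists_eq_mul_of_isFlat_facet (hij : i + 3 ≤ j) (hj : j ≤ n)
    (hfacet : S.ActsFreely i (j - 1)) (hflat : S.IsFlat i (j - 1)) :
    ∀ g ∈ S.group i j, ∃ y ∈ S.group i (j - 2), ∃ x ∈ S.group (i + 1) j, g = y * x := by
  have hfac : ∀ g ∈ S.group i (j - 1), ∃ y ∈ S.group i (j - 2), ∃ x ∈ S.group (i + 1) (j - 1),
      g = y * x := by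
    intro g hg
    obtain ⟨z, hz, hgz⟩ := hflat S.base (g S.base) (S.apply_mem_orbit hg _)
    obtain ⟨x, hx, rfl⟩ := S.mem_orbit.1 hz
    obtain ⟨y, hy, hyx⟩ := S.mem_orbit.1 hgz
    exact ⟨y, intervalSubgroup_mono _ le_rfl (by omega) hy, x, hx,
      hfacet.eq (x := S.base) hg (mul_mem (intervalSubgroup_mono _ le_rfl (by omega) hy)
        (intervalSubgroup_mono _ (by omega) le_rfl hx)) hyx.symm⟩
  refine S.group_induction_left hj ⟨1, one_mem _, 1, one_mem _, (mul_one 1).symm⟩ ?_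
  rintro k hik hkj _ _ ⟨y, hy, x, hx, rfl⟩
  by_cases hk : k < j - 1
  · obtain ⟨y', hy', x', hx', h⟩ := hfac (S.r k * y)
      (mul_mem (mem_intervalSubgroup _ hik hk) (intervalSubgroup_mono _ le_rfl (by omega) hy))
    refine ⟨y', hy', x' * x, mul_mem (intervalSubgroup_mono _ le_rfl (by omega) hx') hx, ?_⟩
    rw [← mul_assoc, h, mul_assoc]
  · have hcomm : Commute y (S.r k) :=
      S.commute_of_mem_group (c := k) (d := j) (by omega) hj hy (mem_intervalSubgroup _ le_rfl hkj)
    refine ⟨y, hy, S.r k * x, mul_mem (mem_intervalSubgroup _ (by omega) hkj) hx, ?_⟩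
    rw [← mul_assoc, ← hcomm.eq, mul_assoc]

theorem actsFreely_of_isFlat_facet (hij : i + 3 ≤ j) (hj : j ≤ n) (hfacet : S.ActsFreely i (j - 1))
    (hfigure : S.ActsFreely (i + 1) j) (hflat : S.IsFlat i (j - 1)) : S.ActsFreely i j := by
  intro g hg Φ hΦ
  obtain ⟨y, hy, x, hx, rfl⟩ := S.exists_eq_mul_of_isFlat_facet hij hj hfacet hflat g hg
  have hyΦ : y⁻¹ Φ = x Φ := Perm.inv_eq_iff_eq.2 hΦ.symm
  obtain ⟨z, hz, hzx⟩ := S.mem_orbit.1 <| S.orbit_inter hj (by omega) (S.apply_mem_orbit hx Φ)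
    (hyΦ ▸ S.apply_mem_orbit (inv_mem hy) Φ) (a := i + 1) (b := j - 2) (by omega) (by omega)
  obtain rfl : z = x := hfigure.eq (intervalSubgroup_mono _ le_rfl (by omega) hz) hx hzx
  exact hfacet _ (mul_mem (intervalSubgroup_mono _ le_rfl (by omega) hy)
    (intervalSubgroup_mono _ (by omega) (by omega) hz)) Φ hΦ

theorem actsFreely_of_isFlat_vertexFigure (hij : i + 3 ≤ j) (hj : j ≤ n)
    (hfacet : S.ActsFreely i (j - 1)) (hfigure : S.ActsFreely (i + 1) j)
    (hflat : S.IsFlat (i + 1) j) : S.ActsFreely i j := by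
  rw [← S.dual_actsFreely (a := n - j) (b := n - i) (by omega) (by omega)]
  refine S.dual.actsFreely_of_isFlat_facet (by omega) (by omega) ?_ ?_ ?_
  · rwa [S.dual_actsFreely (i := i + 1) (j := j) (by omega) (by omega)]
  · rwa [S.dual_actsFreely (i := i) (j := j - 1) (by omega) (by omega)]
  · rwa [S.dual_isFlat (i := i + 1) (j := j) (by omega) (by omega) (by omega) (by omega)]

end FlatAmalgamation

section NonflatGrowth

theorem IsFlat.succ (hj : j + 1 ≤ n) (hij : i < j) (h : S.IsFlat i j) : S.IsFlat i (j + 1) := by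
  intro x y hy
  obtain ⟨g, hg, rfl⟩ := S.mem_orbit.1 hy
  clear hy
  revert g
  refine S.group_induction_left hj ⟨x, S.mem_orbit_self _ _ x, S.mem_orbit_self _ _ x⟩ ?_
  rintro k hik hkj g _ ⟨z, hz, hgz⟩
  rw [Nat.add_sub_cancel] at hgz ⊢
  rcases (Nat.lt_succ_iff.1 hkj).lt_or_eq with hk | rfl
  · exact ⟨z, hz, mem_orbit_trans hgz (S.r_mem_orbit hik hk _)⟩
  · obtain ⟨w, hw, hgw⟩ := h z _ hgz
    obtain ⟨y, hy, hyw⟩ := S.mem_orbit.1 hgw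
    have hcomm : Commute y (S.r k) := S.commute_of_mem_group (c := k) (d := k + 1) (by omega) hj hy
      (mem_intervalSubgroup _ le_rfl (by omega))
    refine ⟨S.r k w, mem_orbit_trans hz (mem_orbit_trans (S.orbit_mono le_rfl (by omega) _ hw)
      (S.r_mem_orbit (by omega) (by omega) _)),
      S.mem_orbit.2 ⟨y, intervalSubgroup_mono _ le_rfl (by omega) hy, ?_⟩⟩
    rw [Perm.mul_apply, ← hyw]
    exact DFunLike.congr_fun hcomm w

theorem IsFlat.of_succ (hj : j ≤ n) (hij : i + 1 < j) (h : S.IsFlat (i + 1) j) :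
    S.IsFlat i j := by
  rw [← S.dual_isFlat (a := n - j) (b := n - i - 1 + 1) (by omega) (by omega) (by omega) (by omega)]
  refine IsFlat.succ _ (by omega) (by omega) ?_
  rwa [S.dual_isFlat (i := i + 1) (j := j) (by omega) (by omega) (by omega) (by omega)]

variable {S} in
theorem IsFlat.mono {a b : ℕ} (h : S.IsFlat i j) (hij : i < j) (ha : a ≤ i) (hb : j ≤ b)
    (hbn : b ≤ n) : S.IsFlat a b := by
  induction b, hb using Nat.le_induction with
  | base =>
    induction i, ha using Nat.le_induction with
    | base => exact h
    | succ i _ ih => exact ih (IsFlat.of_succ S hbn hij h) (by omega)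
  | succ b hb ih => exact IsFlat.succ S hbn (by omega) (ih (by omega))

variable [Finite X]

theorem numFacets_mono (h : k ≤ i) (hij : i < j) (hj : j ≤ n) :
    S.numFacets i j ≤ S.numFacets k j := by
  rw [← S.dual_numVertices (a := n - j) (b := n - i) (by omega) (by omega) (by omega),
    ← S.dual_numVertices (a := n - j) (b := n - k) (by omega) (by omega) (by omega)]
  exact S.dual.numVertices_mono (by omega)

variable [S.IsChiral]

theorem ncard_facets_section (hij : i < j) (hj : j ≤ n) (x : X) :
    (S.orbit i (j - 1) '' S.orbit i j x).ncard = S.numFacets i j :=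
  Nat.eq_of_mul_eq_mul_right (S.numFlags_pos i (j - 1)) <| by
    rw [← S.numFlags_eq_numFacets_mul hj, mul_comm]
    exact (S.numFlags_eq_mul_ncard_image hj (by omega) (by omega) (by omega) x).symm

theorem numFacets_succ_lt (hij : i < j) (hj : j ≤ n) (hflat : ¬ S.IsFlat i j) :
    S.numFacets (i + 1) j < S.numFacets i j := by
  rw [← S.dual_numVertices (a := n - j) (b := n - i - 1) (by omega) (by omega) (by omega),
    ← S.dual_numVertices (a := n - j) (b := n - i - 1 + 1) (by omega) (by omega) (by omega)]
  refine S.dual.numVertices_lt_succ (by omega) ?_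
  rwa [S.dual_isFlat (i := i) (j := j) (by omega) (by omega) (by omega) (by omega)]

theorem le_numVertices_of_not_isFlat (hij : i < j) (hj : j ≤ n) (hflat : ¬ S.IsFlat i j) :
    j - i + 1 ≤ S.numVertices i j := by
  induction j, hij using Nat.le_induction with
  | base => rw [S.numVertices_succ (by omega)]; omega
  | succ j hij ih =>
    have hle := ih (by omega) fun h ↦ hflat (h.mono (by omega) le_rfl (by omega) hj)
    have hlt := S.numVertices_lt_succ hj hflat
    omega

theorem le_numFacets_of_not_isFlat (hij : i < j) (hj : j ≤ n) (hflat : ¬ S.IsFlat i j) :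
    j - i + 1 ≤ S.numFacets i j := by
  have h := S.dual.le_numVertices_of_not_isFlat (i := n - j) (j := n - i) (by omega) (by omega)
    (by rwa [S.dual_isFlat (i := i) (j := j) (by omega) (by omega) (by omega) (by omega)])
  rw [S.dual_numVertices (i := i) (j := j) (by omega) (by omega) (by omega)] at h
  omega

open scoped Nat in
theorem factorial_le_numFlags_of_not_isFlat (hij : i < j) (hj : j ≤ n) (hflat : ¬ S.IsFlat i j) :
    (j - i + 1)! ≤ S.numFlags i j := by
  obtain ⟨d, rfl⟩ := Nat.exists_eq_add_of_lt hij
  induction d generalizing i with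
  | zero => simp [S.numFlags_succ (show i < n by omega)]
  | succ d ih =>
    have hsub := ih (i := i + 1) (by omega) (by omega) fun h ↦
      hflat (by convert h.mono (by omega) (Nat.le_succ i) le_rfl (by omega) using 1; omega)
    have hvert := S.le_numVertices_of_not_isFlat hij hj hflat
    rw [S.numFlags_eq_numVertices_mul hj, Nat.factorial_succ]
    refine Nat.mul_le_mul hvert ?_
    convert hsub using 2 <;> omega

end NonflatGrowth

section Polygon

theorem r_mul_zpow (hk : k < n) (hl : l < n) (m : ℤ) :
    S.r k * (S.r k * S.r l) ^ m = (S.r k * S.r l) ^ (-m) * S.r k := by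
  have hconj : S.r k * (S.r k * S.r l) * (S.r k)⁻¹ = (S.r k * S.r l)⁻¹ := by
    rw [mul_inv_rev, S.r_inv hk, S.r_inv hl, ← mul_assoc, S.r_mul_self k hk, one_mul]
  have hpow := conj_zpow (i := m) (a := S.r k) (b := S.r k * S.r l)
  rw [hconj, inv_zpow'] at hpow
  exact (mul_inv_eq_iff_eq_mul.1 hpow.symm)

theorem exists_zpow_of_mem_group (hk : k + 1 < n) : ∀ g ∈ S.group k (k + 2), ∃ m : ℤ,
    g = (S.r k * S.r (k + 1)) ^ m ∨ g = (S.r k * S.r (k + 1)) ^ m * S.r k := by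
  refine S.group_induction_right (by omega) ⟨0, Or.inl (zpow_zero _).symm⟩ ?_
  rintro l hkl hlk g _ ⟨m, rfl | rfl⟩ <;> obtain rfl | rfl : l = k ∨ l = k + 1 := by omega
  · exact ⟨m, Or.inr rfl⟩
  · refine ⟨m - 1, Or.inr ?_⟩
    rw [zpow_sub_one, mul_inv_rev, S.r_inv (by omega), S.r_inv (show k < n by omega), mul_assoc,
      mul_assoc, S.r_mul_self k (by omega), mul_one]
  · exact ⟨m, Or.inl (by rw [mul_assoc, S.r_mul_self _ (by omega), mul_one])⟩
  · exact ⟨m + 1, Or.inl (by rw [mul_assoc, zpow_add_one])⟩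

theorem orbit_add_two (hk : k + 1 < n) (x : X) :
    S.orbit k (k + 2) x = MulAction.orbit (Subgroup.zpowers (S.r k * S.r (k + 1))) x ∪
      S.r k '' MulAction.orbit (Subgroup.zpowers (S.r k * S.r (k + 1))) x := by
  have hrot (m : ℤ) : (S.r k * S.r (k + 1)) ^ m ∈ S.group k (k + 2) :=
    zpow_mem (mul_mem (mem_intervalSubgroup _ le_rfl (by omega))
      (mem_intervalSubgroup _ (by omega) (by omega))) m
  ext y
  rw [S.mem_orbit]
  constructor
  · rintro ⟨g, hg, rfl⟩
    obtain ⟨m, rfl | rfl⟩ := S.exists_zpow_of_mem_group hk g hg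
    · exact Or.inl ⟨⟨_, m, rfl⟩, rfl⟩
    · refine Or.inr ⟨_, ⟨⟨_, -m, rfl⟩, rfl⟩, ?_⟩
      exact DFunLike.congr_fun ((S.r_mul_zpow (by omega) hk (-m)).trans (by rw [neg_neg])) x
  · rintro (⟨⟨_, m, rfl⟩, rfl⟩ | ⟨_, ⟨⟨_, m, rfl⟩, rfl⟩, rfl⟩)
    · exact ⟨_, hrot m, rfl⟩
    · exact ⟨_, mul_mem (mem_intervalSubgroup _ le_rfl (by omega)) (hrot m), rfl⟩

variable [S.IsChiral]

theorem sameOrbit_zpow (hk : k < n) (hl : l < n) (m : ℤ) (x : X) :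
    S.SameOrbit x (((S.r k * S.r l) ^ m) x) := by
  induction m generalizing x with
  | zero => exact S.sameOrbit_refl hk x
  | succ m ih => exact (S.sameOrbit_r_r hk hl x).trans (by rw [zpow_add_one]; exact ih _)
  | pred m ih =>
    refine (S.sameOrbit_r_r hl hk x).trans ?_
    rw [zpow_sub_one, mul_inv_rev, S.r_inv hk, S.r_inv hl]
    exact ih _

variable [Finite X]

theorem numVertices_pos (hj : j ≤ n) : 0 < S.numVertices i j :=
  Nat.pos_of_mul_pos_right (S.numFlags_eq_numVertices_mul hj ▸ S.numFlags_pos i j)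

theorem numFlags_add_two (hk : k + 1 < n) :
    S.numFlags k (k + 2) = 2 * S.numVertices k (k + 2) := by
  rw [S.numFlags_eq_numVertices_mul (by omega), S.numFlags_succ hk, mul_comm]

theorem numFacets_add_two (hk : k + 1 < n) : S.numFacets k (k + 2) = S.numVertices k (k + 2) := by
  have h : S.numFlags k (k + 2) = S.numFacets k (k + 2) * S.numFlags k (k + 1) :=
    S.numFlags_eq_numFacets_mul (by omega)
  rw [S.numFlags_add_two hk, S.numFlags_succ (by omega)] at h
  omega

theorem minimalPeriod_r_mul_r (hk : k + 1 < n) (x : X) :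
    Function.minimalPeriod ((S.r k * S.r (k + 1)) • ·) x = S.numVertices k (k + 2) := by
  have := Fintype.ofFinite X
  set rotations := MulAction.orbit (Subgroup.zpowers (S.r k * S.r (k + 1))) x with hrotations
  have hdisj : Disjoint rotations (S.r k '' rotations) := by
    rw [Set.disjoint_right]
    rintro _ ⟨y, ⟨⟨_, m, rfl⟩, hy⟩, rfl⟩ ⟨⟨_, m', rfl⟩, hy'⟩
    have hsame : S.SameOrbit x y := hy ▸ S.sameOrbit_zpow (by omega) hk m x
    have hsame' : S.SameOrbit x (S.r k y) := hy' ▸ S.sameOrbit_zpow (by omega) hk m' x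
    exact IsChiral.not_sameOrbit_r k (by omega) y (hsame.symm.trans hsame')
  have hcard := S.ncard_orbit (i := k) (j := k + 2) (by omega) x
  rw [S.orbit_add_two hk, Set.ncard_union_eq hdisj,
    Set.ncard_image_of_injective _ (S.r k).injective, S.numFlags_add_two hk] at hcard
  rw [MulAction.minimalPeriod_eq_card, ← Nat.card_eq_fintype_card, ← hrotations,
    Nat.card_coe_set_eq]
  omega

theorem zpow_apply_eq_iff (hk : k + 1 < n) (x : X) (m : ℤ) :
    ((S.r k * S.r (k + 1)) ^ m) x = x ↔ (S.numVertices k (k + 2) : ℤ) ∣ m := by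
  rw [← S.minimalPeriod_r_mul_r hk x]
  exact MulAction.zpow_smul_eq_iff_minimalPeriod_dvd (a := S.r k * S.r (k + 1))

theorem zpow_eq_one_iff (hk : k + 1 < n) {m : ℤ} :
    (S.r k * S.r (k + 1)) ^ m = 1 ↔ (S.numVertices k (k + 2) : ℤ) ∣ m :=
  ⟨fun h ↦ (S.zpow_apply_eq_iff hk S.base m).1 (by rw [h]; rfl),
    fun h ↦ Perm.ext fun x ↦ (S.zpow_apply_eq_iff hk x m).2 h⟩

theorem pow_eq_one_of_dvd (hk : k + 1 < n) {m : ℕ} (hm : S.numVertices k (k + 2) ∣ m) :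
    (S.r k * S.r (k + 1)) ^ m = 1 := by
  simpa using (S.zpow_eq_one_iff hk).2 (Int.natCast_dvd_natCast.2 hm)

theorem braid (hk : k + 1 < n) (h : S.numVertices k (k + 2) = 3) :
    S.r k * S.r (k + 1) * S.r k = S.r (k + 1) * S.r k * S.r (k + 1) := by
  have hpow := S.pow_eq_one_of_dvd hk h.dvd
  have hinv : (S.r k * S.r (k + 1) * S.r k)⁻¹ = S.r k * S.r (k + 1) * S.r k := by
    simp only [mul_inv_rev, S.r_inv hk, S.r_inv (show k < n by omega), mul_assoc]
  rw [← hinv, inv_eq_iff_mul_eq_one, ← hpow]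
  simp only [pow_succ, pow_zero, one_mul, mul_assoc]

theorem three_le_numVertices (hn : 2 ≤ n) : 3 ≤ S.numVertices 0 2 := by
  by_contra! hlt
  have hpos := S.numVertices_pos (i := 0) (j := 2) hn
  have hdvd : S.numVertices 0 2 ∣ 2 := by
    interval_cases S.numVertices 0 2 <;> decide
  have hsq := S.pow_eq_one_of_dvd (k := 0) (by omega) hdvd
  have hcomm : Commute (S.r 0) (S.r 1) := by
    rwa [zero_add, pow_two, mul_eq_one_iff_eq_inv, mul_inv_rev, S.r_inv (by omega),
      S.r_inv (by omega)] at hsq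
  refine IsChiral.not_sameOrbit_r (S := S) 0 (by omega) S.base ⟨S.r 0, fun i hi ↦ ?_, rfl⟩
  rcases i with _ | _ | i
  · exact Commute.refl _
  · exact hcomm
  · exact S.comm 0 _ (by omega) hi

theorem three_le_numFacets (hn : 2 ≤ n) : 3 ≤ S.numFacets (n - 2) n := by
  rw [← S.dual_numVertices (a := 0) (b := 2) (by omega) (by omega) (by omega)]
  exact S.dual.three_le_numVertices hn

end Polygon

section Triangular

/-- The polygonal sections inside a section between faces of ranks `i - 1` and `j` are triangles;
so the section has the Schläfli type `{3, …, 3}` of a simplex. -/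
def IsTriangular (i j : ℕ) : Prop :=
  ∀ k, i ≤ k → k + 2 ≤ j → S.numVertices k (k + 2) = 3

/-- The product `r i * r (i + 1) * ⋯ * r (i + k - 1)`. -/
def ascendingProd (i : ℕ) : ℕ → Perm X
  | 0 => 1
  | k + 1 => ascendingProd i k * S.r (i + k)

theorem ascendingProd_mem (i k : ℕ) : S.ascendingProd i k ∈ S.group i (i + k) := by
  induction k with
  | zero => exact one_mem _
  | succ k ih =>
    exact mul_mem (intervalSubgroup_mono _ le_rfl (Nat.le_succ _) ih)
      (mem_intervalSubgroup _ (Nat.le_add_right i k) (Nat.lt_succ_self _))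

theorem exists_ascendingProd_succ_eq (i k : ℕ) : ∃ w ∈ S.group (i + 1) (i + k + 1),
    S.ascendingProd i (k + 1) = S.r i * w := by
  induction k with
  | zero => exact ⟨1, one_mem _, (one_mul _).trans (mul_one _).symm⟩
  | succ k ih =>
    obtain ⟨w, hw, h⟩ := ih
    refine ⟨w * S.r (i + k + 1), mul_mem (intervalSubgroup_mono _ le_rfl (by omega) hw)
      (mem_intervalSubgroup _ (by omega) (by omega)), ?_⟩
    rw [ascendingProd, h, mul_assoc, add_assoc]

theorem commute_ascendingProd {m : ℕ} (h : i + k < m) (hm : m < n) :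
    Commute (S.ascendingProd i k) (S.r m) :=
  S.commute_of_mem_group (c := m) (d := m + 1) h hm (S.ascendingProd_mem i k)
    (mem_intervalSubgroup _ le_rfl (by omega))

variable {S} in
theorem IsTriangular.mono {a b : ℕ} (h : S.IsTriangular i j) (ha : i ≤ a) (hb : b ≤ j) :
    S.IsTriangular a b :=
  fun k hak hkb ↦ h k (ha.trans hak) (hkb.trans hb)

theorem isTriangular_of_succ (hij : i + 3 ≤ j) (hfacet : S.IsTriangular i (j - 1))
    (hfigure : S.IsTriangular (i + 1) j) : S.IsTriangular i j := fun k hik hkj ↦ by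
  rcases hik.eq_or_lt with rfl | hik
  · exact hfacet i le_rfl (by omega)
  · exact hfigure k hik hkj

variable [Finite X] [S.IsChiral]

theorem ascendingProd_mul_r {m : ℕ} (hT : S.IsTriangular i j) (hj : j ≤ n) (hk : i + k ≤ j)
    (him : i ≤ m) (hm : m + 1 < i + k) :
    S.ascendingProd i k * S.r m = S.r (m + 1) * S.ascendingProd i k := by
  induction k with
  | zero => omega
  | succ k ih =>
    obtain h | h : m + 1 < i + k ∨ m + 1 = i + k := by omega
    · rw [ascendingProd, mul_assoc, ← (S.comm m (i + k) (by omega) (by omega)).eq, ← mul_assoc,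
        ih (by omega) h, mul_assoc]
    · obtain ⟨k, rfl⟩ : ∃ l, k = l + 1 := ⟨k - 1, by omega⟩
      obtain rfl : m = i + k := by omega
      have hbraid := S.braid (k := i + k) (by omega) (hT _ him (by omega))
      have hcomm := (S.commute_ascendingProd (i := i) (k := k) (m := i + k + 1)
        (by omega) (by omega)).eq
      calc S.ascendingProd i k * S.r (i + k) * S.r (i + k + 1) * S.r (i + k)
          = S.ascendingProd i k * (S.r (i + k) * S.r (i + k + 1) * S.r (i + k)) := by
            simp only [mul_assoc]
        _ = S.ascendingProd i k * S.r (i + k + 1) * (S.r (i + k) * S.r (i + k + 1)) := by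
            rw [hbraid]; simp only [mul_assoc]
        _ = S.r (i + k + 1) * (S.ascendingProd i k * S.r (i + k) * S.r (i + k + 1)) := by
            rw [hcomm]; simp only [mul_assoc]

theorem exists_eq_mul_ascendingProd (hT : S.IsTriangular i j) (hij : i ≤ j) (hj : j ≤ n) :
    ∀ g ∈ S.group i j, ∃ k, i + k ≤ j ∧ ∃ h ∈ S.group (i + 1) j, g = h * S.ascendingProd i k := by
  refine S.group_induction_right hj ⟨0, hij, 1, one_mem _, (mul_one 1).symm⟩ ?_
  rintro m him hmj _ _ ⟨k, hk, h, hh, rfl⟩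
  rcases lt_trichotomy (i + k) m with hkm | rfl | hkm
  · refine ⟨k, hk, h * S.r m, mul_mem hh (mem_intervalSubgroup _ (by omega) hmj), ?_⟩
    rw [mul_assoc, (S.commute_ascendingProd hkm (by omega)).eq, mul_assoc]
  · exact ⟨k + 1, by omega, h, hh, mul_assoc _ _ _⟩
  · obtain hkm | hkm : m + 1 = i + k ∨ m + 1 < i + k := by omega
    · obtain ⟨k, rfl⟩ : ∃ l, k = l + 1 := ⟨k - 1, by omega⟩
      obtain rfl : m = i + k := by omega
      refine ⟨k, by omega, h, hh, ?_⟩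
      rw [ascendingProd, mul_assoc, mul_assoc, S.r_mul_self _ (by omega), mul_one]
    · refine ⟨k, hk, h * S.r (m + 1), mul_mem hh (mem_intervalSubgroup _ (by omega) (by omega)), ?_⟩
      rw [mul_assoc, S.ascendingProd_mul_r hT hj hk him hkm, mul_assoc]

theorem IsTriangular.numVertices_le (hT : S.IsTriangular i j) (hij : i ≤ j) (hj : j ≤ n) :
    S.numVertices i j ≤ j - i + 1 := by
  have hsub : S.orbit (i + 1) n '' S.orbit i j S.base ⊆
      (fun k ↦ S.orbit (i + 1) n (S.ascendingProd i k S.base)) ''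
        (Finset.range (j - i + 1) : Set ℕ) := by
    rintro _ ⟨_, hx, rfl⟩
    obtain ⟨g, hg, rfl⟩ := S.mem_orbit.1 hx
    obtain ⟨k, hk, h, hh, rfl⟩ := S.exists_eq_mul_ascendingProd hT hij hj g hg
    exact ⟨k, by simp only [Finset.coe_range, Set.mem_Iio]; omega,
      S.orbit_eq_iff.2 <| mem_orbit_symm <|
        S.apply_mem_orbit (intervalSubgroup_mono _ le_rfl hj hh) _⟩
  calc S.numVertices i j
      ≤ _ := Set.ncard_le_ncard hsub (Set.toFinite _)
    _ ≤ (Finset.range (j - i + 1) : Set ℕ).ncard := Set.ncard_image_le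
    _ = j - i + 1 := by rw [Set.ncard_coe_finset, Finset.card_range]

open scoped Nat in
theorem IsTriangular.numFlags_le (hT : S.IsTriangular i j) (hij : i ≤ j) (hj : j ≤ n) :
    S.numFlags i j ≤ (j - i + 1)! := by
  induction hij using Nat.decreasingInduction with
  | self => rw [S.numFlags_of_le le_rfl, Nat.sub_self]; decide
  | of_succ i hij ih =>
    rw [S.numFlags_eq_numVertices_mul hj, Nat.factorial_succ]
    refine Nat.mul_le_mul (hT.numVertices_le S (by omega) hj) ?_
    exact (ih (hT.mono (by omega) le_rfl)).trans_eq (congrArg _ (by omega))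

theorem dual_isTriangular {a b : ℕ} (ha : a + j = n) (hb : b + i = n) :
    S.dual.IsTriangular a b ↔ S.IsTriangular i j := by
  have hdual {k l : ℕ} (h : l + (k + 2) = n) :
      S.dual.numVertices l (l + 2) = S.numVertices k (k + 2) := by
    rw [S.dual_numVertices h (i := k) (by omega) (by omega), S.numFacets_add_two (by omega)]
  constructor
  · intro h k hik hkj
    rw [← hdual (l := n - (k + 2)) (by omega)]
    exact h _ (by omega) (by omega)
  · intro h l hal hlb
    rw [hdual (k := n - (l + 2)) (by omega)]
    exact h _ (by omega) (by omega)

end Triangular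

section NontriangularCount

variable [Finite X] [S.IsChiral]

theorem numFlags_rank_three (hi : i + 3 ≤ n) (hflat : ¬ S.IsFlat i (i + 3))
    (hT : ¬ S.IsTriangular i (i + 3)) :
    48 ≤ S.numFlags i (i + 3) ∨ S.numVertices i (i + 2) = 4 ∧ S.numVertices (i + 1) (i + 3) = 4 ∧
      40 ≤ S.numFlags i (i + 3) := by
  have hp := S.le_numVertices_of_not_isFlat (i := i) (j := i + 2) (by omega) (by omega)
    fun h ↦ hflat (h.mono (by omega) le_rfl (by omega) hi)
  have hq := S.le_numVertices_of_not_isFlat (i := i + 1) (j := i + 3) (by omega) hi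
    fun h ↦ hflat (h.mono (by omega) (by omega) le_rfl hi)
  have hV : S.numVertices i (i + 2) < S.numVertices i (i + 3) := S.numVertices_lt_succ hi hflat
  have hF : S.numVertices (i + 1) (i + 3) < S.numFacets i (i + 3) := by
    rw [← S.numFacets_add_two (k := i + 1) hi]
    exact S.numFacets_succ_lt (by omega) hi hflat
  have hNV : S.numFlags i (i + 3) =
      S.numVertices i (i + 3) * (2 * S.numVertices (i + 1) (i + 3)) := by
    rw [S.numFlags_eq_numVertices_mul hi, ← S.numFlags_add_two (k := i + 1) hi]
  have hNF : S.numFlags i (i + 3) = S.numFacets i (i + 3) * (2 * S.numVertices i (i + 2)) := by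
    rw [S.numFlags_eq_numFacets_mul hi, ← S.numFlags_add_two (k := i) (by omega)]
    rfl
  have hpq : ¬ (S.numVertices i (i + 2) = 3 ∧ S.numVertices (i + 1) (i + 3) = 3) := by
    rintro ⟨hp, hq⟩
    refine hT fun k hik hki ↦ ?_
    obtain rfl | rfl : k = i ∨ k = i + 1 := by omega
    exacts [hp, hq]
  generalize S.numVertices i (i + 2) = p at *
  generalize S.numVertices (i + 1) (i + 3) = q at *
  have hp3 : 3 ≤ p := by omega
  have hq3 : 3 ≤ q := by omega
  by_cases hq6 : 6 ≤ q
  · left; nlinarith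
  by_cases hp6 : 6 ≤ p
  · left; nlinarith
  interval_cases p <;> interval_cases q <;> omega

theorem numFlags_rank_four (hi : i + 4 ≤ n) (hflat : ¬ S.IsFlat i (i + 4))
    (hT : ¬ S.IsTriangular i (i + 4)) : 240 ≤ S.numFlags i (i + 4) := by
  have hflat' {a b : ℕ} (hab : a < b) (ha : i ≤ a) (hb : b ≤ i + 4) : ¬ S.IsFlat a b :=
    fun h ↦ hflat (h.mono hab ha hb hi)
  have hNV : S.numFlags i (i + 4) = S.numVertices i (i + 4) * S.numFlags (i + 1) (i + 4) :=
    S.numFlags_eq_numVertices_mul hi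
  have hNF : S.numFlags i (i + 4) = S.numFacets i (i + 4) * S.numFlags i (i + 3) :=
    S.numFlags_eq_numFacets_mul hi
  have hV : 5 ≤ S.numVertices i (i + 4) :=
    le_trans (by omega) (S.le_numVertices_of_not_isFlat (by omega) hi hflat)
  have hF : 5 ≤ S.numFacets i (i + 4) :=
    le_trans (by omega) (S.le_numFacets_of_not_isFlat (by omega) hi hflat)
  have hV3 : S.numVertices i (i + 2) < S.numVertices i (i + 3) :=
    S.numVertices_lt_succ (by omega) (hflat' (by omega) le_rfl (by omega))
  have hV4 : S.numVertices i (i + 3) < S.numVertices i (i + 4) :=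
    S.numVertices_lt_succ hi hflat
  have hfacet := S.numFlags_rank_three (i := i) (by omega) (hflat' (by omega) le_rfl (by omega))
  have hfigure := S.numFlags_rank_three (i := i + 1) hi (hflat' (by omega) (by omega) le_rfl)
  by_cases hTfigure : S.IsTriangular (i + 1) (i + 4)
  · have hTfacet : ¬ S.IsTriangular i (i + 3) := fun h ↦
      hT (S.isTriangular_of_succ (by omega) h hTfigure)
    have hq : S.numVertices (i + 1) (i + 3) = 3 := hTfigure (i + 1) le_rfl (by omega)
    have hN : 48 ≤ S.numFlags i (i + 3) := (hfacet hTfacet).resolve_right (by omega)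
    exact hNF ▸ Nat.mul_le_mul hF hN
  · obtain hN | ⟨hq, -, hN⟩ : 48 ≤ S.numFlags (i + 1) (i + 4) ∨
        S.numVertices (i + 1) (i + 3) = 4 ∧ _ ∧ 40 ≤ S.numFlags (i + 1) (i + 4) :=
      hfigure hTfigure
    · exact hNV ▸ Nat.mul_le_mul hV hN
    · have hTfacet : ¬ S.IsTriangular i (i + 3) := fun h ↦ by
        have : S.numVertices (i + 1) (i + 3) = 3 := h (i + 1) (by omega) le_rfl
        omega
      rcases hfacet hTfacet with hN' | ⟨hp, -, -⟩
      · exact hNF ▸ Nat.mul_le_mul hF hN'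
      · have hV6 : 6 ≤ S.numVertices i (i + 4) := by omega
        exact hNV ▸ Nat.mul_le_mul hV6 hN

open scoped Nat in
theorem two_mul_factorial_le_numFlags (hij : i + 4 ≤ j) (hj : j ≤ n) (hflat : ¬ S.IsFlat i j)
    (hT : ¬ S.IsTriangular i j) : 2 * (j - i + 1)! ≤ S.numFlags i j := by
  obtain ⟨d, rfl⟩ := Nat.exists_eq_add_of_le hij
  induction d generalizing i with
  | zero =>
    rw [show i + 4 + 0 - i + 1 = 5 by omega]
    exact S.numFlags_rank_four hj hflat hT
  | succ d ih =>
    have hV := S.le_numVertices_of_not_isFlat (by omega) hj hflat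
    have hF := S.le_numFacets_of_not_isFlat (by omega) hj hflat
    rw [Nat.factorial_succ, mul_left_comm]
    by_cases hTfigure : S.IsTriangular (i + 1) (i + 4 + (d + 1))
    · have hfacet := ih (i := i) (by omega) (by omega)
        (fun h ↦ hflat (h.mono (by omega) le_rfl (by omega) hj))
        fun h ↦ hT (S.isTriangular_of_succ (by omega) h hTfigure)
      rw [S.numFlags_eq_numFacets_mul hj]
      refine Nat.mul_le_mul hF (Eq.trans_le ?_ hfacet)
      congr 2
      omega
    · rw [show i + 4 + (d + 1) = i + 1 + 4 + d by omega] at *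
      have hfigure := ih (i := i + 1) (by omega) (by omega)
        (fun h ↦ hflat (h.mono (by omega) (by omega) le_rfl hj)) hTfigure
      rw [S.numFlags_eq_numVertices_mul hj]
      refine Nat.mul_le_mul hV (Eq.trans_le ?_ hfigure)
      congr 2
      omega

end NontriangularCount

section Neighbors

variable {b : ℕ}

/-- The other end of the base edge of the flag `x`, encoded as an orbit of `r 1, …, r (b - 1)`, i.e.
as a vertex of the section below the face of rank `b` of `x`. -/
def oppositeVertex (b : ℕ) (x : X) : Set X := S.orbit 1 b (S.r 0 x)

/-- The number of neighbours of the base vertex along the edges in the base face of rank `j`,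
neighbours being distinguished as vertices of the section below the face of rank `b`. -/
noncomputable def numNeighbors (b j : ℕ) : ℕ :=
  (S.oppositeVertex b '' S.orbit 1 j S.base).ncard

theorem oppositeVertex_apply (hb : b ≤ n) {w : Perm X} (hw : w ∈ S.group 2 b)
    (x : X) : S.oppositeVertex b (w x) = S.oppositeVertex b x := by
  refine S.orbit_eq_iff.2 (S.mem_orbit.2 ⟨w, intervalSubgroup_mono _ (by omega) le_rfl hw, ?_⟩)
  exact DFunLike.congr_fun (S.commute_of_mem_group (a := 0) (b := 1) (by omega) hb
    (mem_intervalSubgroup _ le_rfl (by omega)) hw).eq.symm x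

theorem oppositeVertex_eq_of_mem (hjb : j ≤ b) (hb : b ≤ n)
    (hy : y ∈ S.orbit 2 j x) : S.oppositeVertex b y = S.oppositeVertex b x := by
  obtain ⟨g, hg, rfl⟩ := S.mem_orbit.1 hy
  exact S.oppositeVertex_apply hb (intervalSubgroup_mono _ le_rfl hjb hg) x

theorem oppositeVertex_ne (hb1 : 1 ≤ b) (hb : b ≤ n) (hy : y ∈ S.orbit 1 b x) :
    S.oppositeVertex b y ≠ S.orbit 1 b x := by
  intro h
  have hr : S.r 0 y ∈ S.orbit 1 b y := S.orbit_eq_iff.1 (h.trans (S.orbit_eq_iff.2 hy).symm)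
  have hbot := S.orbit_inter hb (by omega) hr (S.r_mem_orbit le_rfl Nat.zero_lt_one y)
    (a := 1) (b := 1) (by omega) (by omega)
  rw [S.orbit_of_le le_rfl] at hbot
  exact S.r_ne 0 (by omega) y hbot

theorem oppositeVertex_apply_of_commute (hb1 : 1 ≤ b) (hb : b ≤ n) {f : Perm X}
    (hf : ∀ i < n, Commute f (S.r i)) (x : X) :
    S.oppositeVertex b (f x) = f '' S.oppositeVertex b x := by
  rw [oppositeVertex, oppositeVertex, image_orbit_of_commute hf hb]
  exact congrArg _ (DFunLike.congr_fun (hf 0 (by omega)).eq x).symm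

theorem image_setOf_oppositeVertex_eq (hb1 : 1 ≤ b) (hb : b ≤ n) (hj : j ≤ n) {f : Perm X}
    (hf : ∀ i < n, Commute f (S.r i)) (x : X) :
    f '' {y ∈ S.orbit 1 j x | S.oppositeVertex b y = S.oppositeVertex b x} =
      {y ∈ S.orbit 1 j (f x) | S.oppositeVertex b y = S.oppositeVertex b (f x)} := by
  ext y
  obtain ⟨y, rfl⟩ := f.surjective y
  rw [f.injective.mem_set_image, Set.mem_ofPred_eq, Set.mem_ofPred_eq,
    ← image_orbit_of_commute hf hj, f.injective.mem_set_image,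
    S.oppositeVertex_apply_of_commute hb1 hb hf, S.oppositeVertex_apply_of_commute hb1 hb hf,
    f.injective.image_injective.eq_iff]

theorem ncard_setOf_oppositeVertex_eq [S.IsChiral] (hj : 3 ≤ j) (hjb : j ≤ b) (hb : b ≤ n)
    (x : X) :
    {y ∈ S.orbit 1 j x | S.oppositeVertex b y = S.oppositeVertex b x}.ncard =
      {y ∈ S.orbit 1 j S.base | S.oppositeVertex b y = S.oppositeVertex b S.base}.ncard := by
  obtain ⟨z, hz, f, hf, rfl⟩ := S.exists_mem_orbit_sameOrbit (i := 2) (k := 2) (j := j) le_rfl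
    (by omega) (by omega) x S.base
  rw [← S.oppositeVertex_eq_of_mem hjb hb hz,
    ← S.orbit_eq_iff.2 (S.orbit_mono (i' := 1) (by omega) le_rfl _ hz),
    ← S.image_setOf_oppositeVertex_eq (by omega) hb (by omega) hf,
    Set.ncard_image_of_injective _ f.injective]

variable [Finite X]

theorem numNeighbors_mono (h : j ≤ k) : S.numNeighbors b j ≤ S.numNeighbors b k :=
  Set.ncard_le_ncard (Set.image_mono (S.orbit_mono le_rfl h _))

variable [S.IsChiral]

theorem oppositeVertex_r_one_ne (hb2 : 2 ≤ b) (hb : b ≤ n) (x : X) :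
    S.oppositeVertex b (S.r 1 x) ≠ S.oppositeVertex b x := by
  intro h
  have hmem : S.r 0 x ∈ S.orbit 0 2 (S.r 0 (S.r 1 x)) :=
    mem_orbit_trans (mem_orbit_symm (S.r_mem_orbit le_rfl (by omega) _)) <|
      mem_orbit_trans (mem_orbit_symm (S.r_mem_orbit (by omega) (by omega) _)) <|
        S.r_mem_orbit le_rfl (by omega) _
  have hpair := S.orbit_inter hb (by omega) (S.orbit_eq_iff.1 h.symm) hmem (a := 1) (b := 2)
    (by omega) (by omega)
  rw [S.orbit_succ (by omega), Set.mem_insert_iff, Set.mem_singleton_iff] at hpair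
  rcases hpair with hx | hx
  · exact S.r_ne 1 (by omega) x ((S.r 0).injective hx).symm
  · have hfix : ((S.r 0 * S.r (0 + 1)) ^ (2 : ℤ)) x = x := by
      simp only [zpow_ofNat, pow_two, Perm.mul_apply, zero_add, ← hx]
      exact S.r_r (by omega) x
    have hdvd : S.numVertices 0 2 ∣ 2 :=
      Int.natCast_dvd_natCast.1 ((S.zpow_apply_eq_iff (by omega) x 2).1 hfix)
    exact absurd (S.three_le_numVertices (by omega)) (by have := Nat.le_of_dvd two_pos hdvd; omega)

theorem ncard_image_oppositeVertex_lt (hb1 : 1 ≤ b) (hb : b ≤ n) (x : X) :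
    (S.oppositeVertex b '' S.orbit 1 b x).ncard < S.numVertices 0 b := by
  rw [← S.ncard_vertices_section hb x]
  refine Set.ncard_lt_ncard ⟨?_, fun h ↦ ?_⟩
  · rintro _ ⟨y, hy, rfl⟩
    exact ⟨S.r 0 y, mem_orbit_trans (S.orbit_mono (by omega) le_rfl _ hy)
      (S.r_mem_orbit le_rfl (by omega) _), rfl⟩
  · obtain ⟨y, hy, hyx⟩ := h ⟨x, S.mem_orbit_self _ _ _, rfl⟩
    exact S.oppositeVertex_ne hb1 hb hy hyx

theorem numNeighbors_lt (hb1 : 1 ≤ b) (hjb : j ≤ b) (hb : b ≤ n) :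
    S.numNeighbors b j < S.numVertices 0 b :=
  (S.numNeighbors_mono hjb).trans_lt (S.ncard_image_oppositeVertex_lt hb1 hb S.base)

theorem two_le_numNeighbors (hj : 2 ≤ j) (hjb : j ≤ b) (hb : b ≤ n) :
    2 ≤ S.numNeighbors b j := by
  rw [← Set.ncard_pair (S.oppositeVertex_r_one_ne (hj.trans hjb) hb S.base)]
  refine Set.ncard_le_ncard (Set.pair_subset ?_ ?_)
  · exact ⟨_, S.r_mem_orbit le_rfl (by omega) _, rfl⟩
  · exact ⟨_, S.mem_orbit_self _ _ _, rfl⟩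

theorem numNeighbors_two (hb2 : 2 ≤ b) (hb : b ≤ n) : S.numNeighbors b 2 = 2 :=
  ((Set.ncard_image_le (Set.toFinite _)).trans (S.numFlags_succ (i := 1) (by omega)).le).antisymm
    (S.two_le_numNeighbors le_rfl hb2 hb)

theorem numNeighbors_dvd (hj : 2 ≤ j) (hjb : j ≤ b) (hb : b ≤ n) :
    S.numNeighbors b j ∣ S.numVertices 1 j := by
  rcases hj.eq_or_lt with rfl | hj
  · rw [S.numVertices_succ (by omega), S.numNeighbors_two hjb hb]
  set fiber := {y ∈ S.orbit 1 j S.base | S.oppositeVertex b y = S.oppositeVertex b S.base}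
  have hflags : S.numFlags 1 j = fiber.ncard * S.numNeighbors b j :=
    ncard_eq_mul_ncard_image (Set.toFinite _) _ fun x hx ↦ by
      rw [← S.orbit_eq_iff.2 hx, S.ncard_setOf_oppositeVertex_eq hj hjb hb]
  have hedges : fiber.ncard = S.numFlags 2 j * (S.orbit 2 j '' fiber).ncard := by
    refine ncard_eq_mul_ncard_image (Set.toFinite _) _ fun x hx ↦ ?_
    rw [← S.ncard_orbit (by omega) x]
    congr 1
    ext y
    refine ⟨fun hy ↦ S.orbit_eq_iff.1 hy.2, fun hy ↦ ⟨⟨?_, ?_⟩, S.orbit_eq_iff.2 hy⟩⟩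
    · exact mem_orbit_trans hx.1 (S.orbit_mono (by omega) le_rfl _ hy)
    · exact (S.oppositeVertex_eq_of_mem hjb hb hy).trans hx.2
  rw [S.numFlags_eq_numVertices_mul (by omega), hedges, mul_comm, mul_assoc] at hflags
  exact Dvd.intro_left _ (Nat.eq_of_mul_eq_mul_left (S.numFlags_pos 2 j) hflags).symm

theorem two_dvd_numVertices_one (hj : 2 ≤ j) (hjb : j ≤ b) (hb : b ≤ n)
    (hthree : S.numVertices 0 b = 3) : 2 ∣ S.numVertices 1 j := by
  have hge := S.two_le_numNeighbors hj hjb hb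
  have hlt := S.numNeighbors_lt (by omega) hjb hb
  rw [← show S.numNeighbors b j = 2 by omega]
  exact S.numNeighbors_dvd hj hjb hb

theorem le_numVertices_one_of_numVertices_zero_eq_three (hj : 2 ≤ j) (hjb : j ≤ b) (hb : b ≤ n)
    (hthree : S.numVertices 0 b = 3) (hflat : ¬ S.IsFlat 1 j) :
    2 * (j - 1) ≤ S.numVertices 1 j := by
  induction j, hj using Nat.le_induction with
  | base => rw [S.numVertices_succ (by omega)]
  | succ j hj ih =>
    have hle := ih (by omega) fun h ↦ hflat (h.mono (by omega) le_rfl (by omega) (by omega))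
    have hlt := S.numVertices_lt_succ (i := 1) (by omega) hflat
    have hdvd := S.two_dvd_numVertices_one hj (by omega) hb hthree
    have hdvd' := S.two_dvd_numVertices_one (j := j + 1) (by omega) hjb hb hthree
    omega

theorem le_numVertices_one_of_numVertices_zero_le_four (hj : 2 ≤ j) (hjb : j ≤ b) (hb : b ≤ n)
    (hfour : S.numVertices 0 b ≤ 4) (hflat : ¬ S.IsFlat 1 j) :
    2 * (j - 1) ≤ S.numVertices 1 j + 1 ∧
      (S.numNeighbors b j = 2 → 2 * (j - 1) ≤ S.numVertices 1 j) := by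
  induction j, hj using Nat.le_induction with
  | base => rw [S.numVertices_succ (by omega)]; omega
  | succ j hj ih =>
    have hle := ih (by omega) fun h ↦ hflat (h.mono (by omega) le_rfl (by omega) (by omega))
    have hV := S.numVertices_lt_succ (i := 1) (by omega) hflat
    have hge := S.two_le_numNeighbors hj (by omega) hb
    have hlt := S.numNeighbors_lt (j := j + 1) (by omega) hjb hb
    have hmono : S.numNeighbors b j ≤ S.numNeighbors b (j + 1) := S.numNeighbors_mono (by omega)
    have hdvd := S.numNeighbors_dvd hj (by omega) hb
    have hdvd' := S.numNeighbors_dvd (j := j + 1) (by omega) hjb hb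
    obtain h | h : S.numNeighbors b j = 2 ∨ S.numNeighbors b j = 3 := by omega
    all_goals
      obtain h' | h' : S.numNeighbors b (j + 1) = 2 ∨ S.numNeighbors b (j + 1) = 3 := by omega
      all_goals
        rw [h] at hdvd hle
        rw [h'] at hdvd' ⊢
        omega

section AscendingProd

theorem exists_ascendingProd_mul (hT : S.IsTriangular i j) (hj : j ≤ n) (hk : i + k ≤ j)
    (hlk : l < k) : ∃ v ∈ S.group (i + 1) j,
      S.ascendingProd i k * S.ascendingProd i l = v * S.ascendingProd i k := by
  induction l with
  | zero => exact ⟨1, one_mem _, (mul_one _).trans (one_mul _).symm⟩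
  | succ l ih =>
    obtain ⟨v, hv, h⟩ := ih (by omega)
    refine ⟨v * S.r (i + l + 1), mul_mem hv (mem_intervalSubgroup _ (by omega) (by omega)), ?_⟩
    rw [ascendingProd, ← mul_assoc, h, mul_assoc,
      S.ascendingProd_mul_r hT hj hk (Nat.le_add_right i l) (by omega), mul_assoc]

theorem oppositeVertex_ascendingProd_ne (hjb : j ≤ b) (hb : b ≤ n) (hT : S.IsTriangular 1 j)
    (hk : 1 + k ≤ j) (hlk : l < k) (x : X) :
    S.oppositeVertex b (S.ascendingProd 1 k x) ≠ S.oppositeVertex b (S.ascendingProd 1 l x) := by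
  intro h
  obtain ⟨k, rfl⟩ : ∃ m, k = m + 1 := ⟨k - 1, by omega⟩
  obtain ⟨v, hv, hvk⟩ := S.exists_ascendingProd_mul hT (by omega) hk hlk
  obtain ⟨w, hw, hwk⟩ := S.exists_ascendingProd_succ_eq 1 k
  refine S.oppositeVertex_r_one_ne (by omega) hb (w (S.ascendingProd 1 l x)) ?_
  calc S.oppositeVertex b (S.r 1 (w (S.ascendingProd 1 l x)))
      = S.oppositeVertex b ((v * S.ascendingProd 1 (k + 1)) x) := by rw [← hvk, hwk]; rfl
    _ = S.oppositeVertex b (S.ascendingProd 1 (k + 1) x) :=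
      S.oppositeVertex_apply hb (intervalSubgroup_mono _ le_rfl hjb hv) _
    _ = S.oppositeVertex b (S.ascendingProd 1 l x) := h
    _ = S.oppositeVertex b (w (S.ascendingProd 1 l x)) :=
      (S.oppositeVertex_apply hb
        (intervalSubgroup_mono _ le_rfl (by omega) hw) _).symm

theorem lt_numVertices_zero_of_isTriangular (hj : 1 ≤ j) (hjb : j ≤ b) (hb : b ≤ n)
    (hT : S.IsTriangular 1 j) : j < S.numVertices 0 b := by
  refine lt_of_le_of_lt ?_ (S.numNeighbors_lt (hj.trans hjb) le_rfl hb)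
  have hinj : Set.InjOn (fun k ↦ S.oppositeVertex b (S.ascendingProd 1 k S.base))
      (Finset.range j) := by
    intro k hk l hl h
    rw [Finset.mem_coe, Finset.mem_range] at hk hl
    rcases lt_trichotomy k l with hkl | hkl | hkl
    · exact absurd h.symm (S.oppositeVertex_ascendingProd_ne hjb hb hT (by omega) hkl _)
    · exact hkl
    · exact absurd h (S.oppositeVertex_ascendingProd_ne hjb hb hT (by omega) hkl _)
  calc j = (Finset.range j : Set ℕ).ncard := by rw [Set.ncard_coe_finset, Finset.card_range]
    _ = _ := hinj.ncard_image.symm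
    _ ≤ S.numNeighbors b b := Set.ncard_le_ncard ?_
  rintro _ ⟨k, hk, rfl⟩
  rw [Finset.mem_coe, Finset.mem_range] at hk
  exact ⟨_, S.apply_mem_orbit
    (intervalSubgroup_mono _ le_rfl (by omega) (S.ascendingProd_mem 1 k)) _, rfl⟩

end AscendingProd

end Neighbors

section LongReflection

section Group

variable {Γ : Type*} [Group Γ] {a b c : Γ}

theorem braid_conj {w : Γ} (h : a * b * a = b * a * b) (hw : Commute w b) :
    w * a * w⁻¹ * b * (w * a * w⁻¹) = b * (w * a * w⁻¹) * b := by
  have hconj := congrArg (fun g ↦ w * g * w⁻¹) h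
  have hb : w * b * w⁻¹ = b := by rw [hw.eq, mul_inv_cancel_right]
  calc w * a * w⁻¹ * b * (w * a * w⁻¹)
      = w * a * w⁻¹ * (w * b * w⁻¹) * (w * a * w⁻¹) := by rw [hb]
    _ = w * (a * b * a) * w⁻¹ := by group
    _ = w * (b * a * b) * w⁻¹ := hconj
    _ = w * b * w⁻¹ * (w * a * w⁻¹) * (w * b * w⁻¹) := by group
    _ = b * (w * a * w⁻¹) * b := by rw [hb]

theorem commute_palindrome (hab : a * b * a = b * a * b) (hac : Commute a c) :
    Commute b (a * b * c * b * a) := by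
  calc b * (a * b * c * b * a) = b * a * b * c * b * a := by simp only [mul_assoc]
    _ = a * b * (a * c) * b * a := by rw [← hab]; simp only [mul_assoc]
    _ = a * b * c * (a * b * a) := by rw [hac.eq]; simp only [mul_assoc]
    _ = a * b * c * b * a * b := by rw [hab]; simp only [mul_assoc]

theorem eq_of_palindrome_eq (ha : a * a = 1) (hb : b * b = 1) (hab : a * b * a = b * a * b)
    (h : a * b * c * b * a = b) : c = a := by
  calc c = b * (a * a) * b * c * b * (a * a) * b := by simp [ha, hb, mul_assoc]
    _ = b * a * (a * b * c * b * a) * a * b := by simp only [mul_assoc]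
    _ = b * (a * b * a) * b := by rw [h]; simp only [mul_assoc]
    _ = b * b * a * (b * b) := by rw [hab]; simp only [mul_assoc]
    _ = a := by rw [hb, one_mul, mul_one]

theorem eq_of_palindrome_eq_of_pow_four (ha : a * a = 1) (hb : b * b = 1) (hc : c * c = 1)
    (hab : a * b * a = b * a * b) (hac : Commute a c) (hbc : (b * c) ^ 4 = 1)
    (h : a * b * c * b * a = (b * c) ^ 2 * b) : c = a := by
  have ha' : a⁻¹ = a := inv_eq_of_mul_eq_one_left ha
  have hb' : b⁻¹ = b := inv_eq_of_mul_eq_one_left hb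
  have hc' : c⁻¹ = c := inv_eq_of_mul_eq_one_left hc
  have hsq : (b * c) ^ 2 * b = c * b * c := by
    rw [← mul_inv_eq_one, ← hbc]
    simp only [mul_inv_rev, hb', hc', pow_succ, pow_zero, one_mul, mul_assoc]
  have hbcb : b * c * b = c * b * a * b * c := by
    calc b * c * b = a⁻¹ * (a * b * c * b * a) * a⁻¹ := by group
      _ = a * c * b * (c * a) := by rw [h, hsq, ha']; simp only [mul_assoc]
      _ = c * (a * b * a) * c := by rw [← hac.eq]; nth_rw 1 [hac.eq]; simp only [mul_assoc]
      _ = c * b * a * b * c := by rw [hab]; simp only [mul_assoc]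
  have haeq : a = (b * c) ^ 4 * c⁻¹ := by
    calc a = b⁻¹ * c⁻¹ * (c * b * a * b * c) * c⁻¹ * b⁻¹ := by group
      _ = b * c * (b * c * b) * c * b := by rw [← hbcb, hb', hc']
      _ = (b * c) ^ 4 * c⁻¹ := by
        simp only [pow_succ, pow_zero, one_mul, mul_assoc, mul_inv_cancel, mul_one]
  rw [haeq, hbc, one_mul, hc']

theorem six_dvd_of_zpow_mem (H : Subgroup Γ) (hsix : a ^ 6 ∈ H) (hsq : a ^ 2 ∉ H)
    (hcube : a ^ 3 ∉ H) {m : ℤ} (hm : a ^ m ∈ H) : 6 ∣ m := by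
  have hgcd : a ^ Int.gcd m 6 ∈ H := by
    rw [← zpow_natCast, Int.gcd_eq_gcd_ab, zpow_add, zpow_mul, zpow_mul]
    exact mul_mem (zpow_mem hm _) (zpow_mem (by exact_mod_cast hsix) _)
  have hmem : ∀ d, Int.gcd m 6 ∣ d → a ^ d ∈ H := by
    rintro _ ⟨e, rfl⟩
    rw [pow_mul]
    exact pow_mem hgcd e
  have h2 : ¬ Int.gcd m 6 ∣ 2 := fun h ↦ hsq (hmem 2 h)
  have h3 : ¬ Int.gcd m 6 ∣ 3 := fun h ↦ hcube (hmem 3 h)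
  have hdvd : Int.gcd m 6 ∣ 6 := Int.natCast_dvd_natCast.1 (Int.gcd_dvd_right m 6)
  have hle := Nat.le_of_dvd (by omega) hdvd
  have hdvd' := Int.gcd_dvd_left m 6
  interval_cases Int.gcd m 6 <;> omega

end Group

theorem r_notMem_group (hk : k < n) (h : k < i ∨ j ≤ k) (hj : j ≤ n) : S.r k ∉ S.group i j := by
  intro hmem
  have hbot := S.orbit_inter hj (by omega) (S.apply_mem_orbit hmem S.base)
    (S.r_mem_orbit le_rfl k.lt_succ_self S.base) rfl rfl
  rw [S.orbit_of_le (by omega)] at hbot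
  exact S.r_ne k hk _ hbot

/-- The reflection of the base face of rank 3 that is the transposition `(0 3)` when this face is a
tetrahedron. -/
def longReflection : Perm X := S.r 0 * S.r 1 * S.r 2 * S.r 1 * S.r 0

variable [Finite X] [S.IsChiral] {b : ℕ}

theorem braid_zero_one (hb2 : 2 ≤ b) (hb : b ≤ n) (hthree : S.numVertices 0 b = 3) :
    S.r 0 * S.r 1 * S.r 0 = S.r 1 * S.r 0 * S.r 1 :=
  S.braid (k := 0) (by omega)
    (((S.numVertices_mono hb2).trans hthree.le).antisymm (S.three_le_numVertices (by omega)))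

theorem oppositeVertex_r_one_r_two (hb3 : 3 ≤ b) (hb : b ≤ n) (hthree : S.numVertices 0 b = 3)
    (x : X) : S.oppositeVertex b (S.r 1 (S.r 2 x)) = S.oppositeVertex b (S.r 1 x) := by
  by_contra hne
  have hne₂ := S.oppositeVertex_r_one_ne (by omega) hb (S.r 2 x)
  rw [S.oppositeVertex_apply hb (mem_intervalSubgroup _ le_rfl (by omega))] at hne₂
  have hcard : ({S.oppositeVertex b (S.r 1 (S.r 2 x)), S.oppositeVertex b (S.r 1 x),
      S.oppositeVertex b x} : Set (Set X)).ncard = 3 :=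
    Set.ncard_eq_three.2 ⟨_, _, _, hne, hne₂, S.oppositeVertex_r_one_ne (by omega) hb x, rfl⟩
  refine (S.ncard_image_oppositeVertex_lt (by omega) hb x).not_ge ?_
  rw [hthree, ← hcard]
  refine Set.ncard_le_ncard ?_
  rintro _ (rfl | rfl | rfl)
  · exact ⟨_, mem_orbit_trans (S.r_mem_orbit (by omega) (by omega) _)
      (S.r_mem_orbit le_rfl (by omega) _), rfl⟩
  · exact ⟨_, S.r_mem_orbit le_rfl (by omega) _, rfl⟩
  · exact ⟨_, S.mem_orbit_self _ _ _, rfl⟩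

theorem longReflection_mem (hn : 5 ≤ n) (hb3 : 3 ≤ b) (hb : b ≤ n)
    (hthree : S.numVertices 0 b = 3) : S.longReflection ∈ S.group 1 3 := by
  have hmem : S.longReflection ∈ S.group 0 3 := by
    have hr : ∀ k < 3, S.r k ∈ S.group 0 3 := fun k hk ↦
      mem_intervalSubgroup _ (Nat.zero_le k) hk
    exact mul_mem (mul_mem (mul_mem (mul_mem (hr 0 (by omega)) (hr 1 (by omega)))
      (hr 2 (by omega))) (hr 1 (by omega))) (hr 0 (by omega))
  have hvertex := S.oppositeVertex_r_one_r_two hb3 hb hthree (S.r 1 (S.r 0 S.base))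
  rw [oppositeVertex, oppositeVertex, S.r_r (by omega), S.r_r (by omega)] at hvertex
  obtain ⟨g, hg, hgx⟩ := S.mem_orbit.1 (S.orbit_inter (a := 1) (b := 3) hb (by omega)
    (S.orbit_eq_iff.1 hvertex) (S.apply_mem_orbit hmem S.base) (by omega) (by omega))
  have hfree : S.ActsFreely 0 3 := S.actsFreely_of_add_two_le hn
  rwa [← hfree.eq (intervalSubgroup_mono _ (by omega) le_rfl hg) hmem hgx]

-- An automorphism class is preserved by an even number of adjacency involutions, so the palindrome,
-- of odd length, is not a power of `r 1 * r 2`.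
theorem exists_longReflection_eq (hn : 5 ≤ n) (hb3 : 3 ≤ b) (hb : b ≤ n)
    (hthree : S.numVertices 0 b = 3) :
    ∃ m : ℤ, S.longReflection = (S.r 1 * S.r 2) ^ m * S.r 1 := by
  obtain ⟨m, h | h⟩ := S.exists_zpow_of_mem_group (k := 1) (by omega) _
    (S.longReflection_mem hn hb3 hb hthree)
  · have hodd : S.SameOrbit (S.r 0 S.base) (S.longReflection S.base) :=
      (S.sameOrbit_r_r (by omega) (by omega) _).trans (S.sameOrbit_r_r (by omega) (by omega) _)
    rw [h] at hodd
    exact absurd ((S.sameOrbit_zpow (by omega) (by omega) m _).trans hodd.symm)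
      (IsChiral.not_sameOrbit_r 0 (by omega) _)
  · exact ⟨m, h⟩

theorem dvd_two_mul_of_longReflection_eq (hb2 : 2 ≤ b) (hb : b ≤ n) (hn : 3 ≤ n)
    (hthree : S.numVertices 0 b = 3) {m : ℤ}
    (hm : S.longReflection = (S.r 1 * S.r 2) ^ m * S.r 1) : (S.numVertices 1 3 : ℤ) ∣ 2 * m := by
  have hcomm : Commute (S.r 1) S.longReflection :=
    commute_palindrome (S.braid_zero_one hb2 hb hthree) (S.comm 0 2 le_rfl (by omega))
  rw [hm, Commute, SemiconjBy, ← mul_assoc, mul_left_inj,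
    S.r_mul_zpow (by omega) (by omega), mul_left_inj] at hcomm
  rw [← S.zpow_eq_one_iff (k := 1) (by omega), two_mul, zpow_add]
  nth_rw 1 [← hcomm]
  rw [← zpow_add, neg_add_cancel, zpow_zero]

theorem not_dvd_of_longReflection_eq (hb2 : 2 ≤ b) (hb : b ≤ n) (hn : 3 ≤ n)
    (hthree : S.numVertices 0 b = 3) {m : ℤ}
    (hm : S.longReflection = (S.r 1 * S.r 2) ^ m * S.r 1) : ¬ (S.numVertices 1 3 : ℤ) ∣ m := by
  intro hdvd
  rw [(S.zpow_eq_one_iff (k := 1) (by omega)).2 hdvd, one_mul] at hm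
  have h := eq_of_palindrome_eq (S.r_mul_self 0 (by omega)) (S.r_mul_self 1 (by omega))
    (S.braid_zero_one hb2 hb hthree) hm
  refine S.r_notMem_group (i := 0) (j := 1) (k := 2) (by omega) (by omega) (by omega) ?_
  rw [h]
  exact mem_intervalSubgroup _ le_rfl Nat.zero_lt_one

theorem longReflection_eq_pow (hn : 5 ≤ n) (hb3 : 3 ≤ b) (hb : b ≤ n)
    (hthree : S.numVertices 0 b = 3) {h : ℕ} (hp : S.numVertices 1 3 = 2 * h) :
    S.longReflection = (S.r 1 * S.r 2) ^ h * S.r 1 := by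
  obtain ⟨m, hm⟩ := S.exists_longReflection_eq hn hb3 hb hthree
  have hdvd := S.dvd_two_mul_of_longReflection_eq (by omega) hb (by omega) hthree hm
  have hndvd := S.not_dvd_of_longReflection_eq (by omega) hb (by omega) hthree hm
  rw [hm, mul_left_inj, ← zpow_natCast, ← mul_inv_eq_one, ← zpow_neg, ← zpow_add,
    S.zpow_eq_one_iff (k := 1) (by omega)]
  rw [hp] at hdvd hndvd ⊢
  push_cast at hdvd hndvd ⊢
  obtain ⟨q, hq⟩ := Int.dvd_of_mul_dvd_mul_left two_ne_zero hdvd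
  rcases Int.even_or_odd' q with ⟨q, rfl | rfl⟩
  · exact absurd ⟨q, by rw [hq]; ring⟩ hndvd
  · exact ⟨q, by rw [hq]; ring⟩

theorem numVertices_one_three_ne_four (hn : 5 ≤ n) (hb3 : 3 ≤ b) (hb : b ≤ n)
    (hthree : S.numVertices 0 b = 3) : S.numVertices 1 3 ≠ 4 := by
  intro hp
  have h := eq_of_palindrome_eq_of_pow_four (S.r_mul_self 0 (by omega)) (S.r_mul_self 1 (by omega))
    (S.r_mul_self 2 (by omega)) (S.braid_zero_one (by omega) hb hthree)
    (S.comm 0 2 le_rfl (by omega)) (S.pow_eq_one_of_dvd (k := 1) (by omega) hp.dvd)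
    (S.longReflection_eq_pow hn hb3 hb hthree hp)
  refine S.r_notMem_group (i := 0) (j := 1) (k := 2) (by omega) (by omega) (by omega) ?_
  rw [h]
  exact mem_intervalSubgroup _ le_rfl Nat.zero_lt_one

section HexagonalVertexFigure

theorem conj_cube_notMem (hn : 5 ≤ n) (hb3 : 3 ≤ b) (hb : b ≤ n) (hthree : S.numVertices 0 b = 3)
    (h24 : S.numVertices 2 4 = 3) (hp : S.numVertices 1 3 = 6) :
    S.r 3 * (S.r 1 * S.r 2) ^ 3 * S.r 3 ∉ S.group 1 3 := by
  intro hmem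
  have hz := S.longReflection_mem hn hb3 hb hthree
  have hbraid : S.longReflection * S.r 3 * S.longReflection =
      S.r 3 * S.longReflection * S.r 3 := by
    have hconj : S.r 0 * S.r 1 * S.r 2 * (S.r 0 * S.r 1)⁻¹ = S.longReflection := by
      rw [mul_inv_rev, S.r_inv (by omega), S.r_inv (by omega), longReflection]
      simp only [mul_assoc]
    rw [← hconj]
    exact braid_conj (S.braid (k := 2) (by omega) h24)
      ((S.comm 0 3 (by omega) (by omega)).mul_left (S.comm 1 3 le_rfl (by omega)))
  have hzs : S.r 3 * S.longReflection * S.r 3 ∈ S.group 1 3 := by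
    rw [S.longReflection_eq_pow (h := 3) hn hb3 hb hthree hp, mul_assoc, mul_assoc,
      (S.comm 1 3 le_rfl (by omega)).eq, ← mul_assoc, ← mul_assoc]
    exact mul_mem hmem (mem_intervalSubgroup _ le_rfl (by omega))
  rw [← hbraid, Subgroup.mul_mem_cancel_right _ hz, Subgroup.mul_mem_cancel_left _ hz] at hzs
  exact S.r_notMem_group (by omega) (Or.inr le_rfl) (by omega) hzs

theorem exists_eq_mul_of_conj_sq_mem (hn : 4 ≤ n) (h24 : S.numVertices 2 4 = 3)
    (hsq : S.r 3 * (S.r 1 * S.r 2) ^ 2 * S.r 3 ∈ S.group 1 3) :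
    ∀ g ∈ S.group 1 4, ∃ d ∈ S.group 1 3,
      g = d ∨ g = d * S.r 3 ∨ g = d * S.r 3 * S.r 2 := by
  have hr1 : S.r 1 ∈ S.group 1 3 := mem_intervalSubgroup _ le_rfl (by omega)
  have hr2 : S.r 2 ∈ S.group 1 3 := mem_intervalSubgroup _ (by omega) (by omega)
  have h1 := S.r_mul_self 1 (by omega)
  have h2 := S.r_mul_self 2 (by omega)
  have h3 := S.r_mul_self 3 (by omega)
  have hcomm := (S.comm 1 3 le_rfl (by omega)).eq
  have hbraid := S.braid (k := 2) (by omega) h24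
  refine S.group_induction_right hn ⟨1, one_mem _, Or.inl rfl⟩ ?_
  rintro k hk1 hk4 g - ⟨d, hd, hg⟩
  obtain rfl | rfl | rfl : k = 1 ∨ k = 2 ∨ k = 3 := by omega
  · rcases hg with rfl | rfl | rfl
    · exact ⟨_, mul_mem hd hr1, Or.inl rfl⟩
    · exact ⟨_, mul_mem hd hr1, Or.inr (Or.inl (by rw [mul_assoc, ← hcomm, ← mul_assoc]))⟩
    · refine ⟨_, mul_mem (mul_mem hd (inv_mem hsq)) hr1, Or.inr (Or.inr ?_)⟩
      have hinv : (S.r 3 * (S.r 1 * S.r 2) ^ 2 * S.r 3)⁻¹ =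
          S.r 3 * (S.r 2 * S.r 1 * S.r 2 * S.r 1) * S.r 3 := by
        simp only [mul_inv_rev, pow_two, S.r_inv (show 1 < n by omega),
          S.r_inv (show 2 < n by omega), S.r_inv (show 3 < n by omega), mul_assoc]
      calc d * S.r 3 * S.r 2 * S.r 1
          = d * S.r 3 * S.r 2 * S.r 1 * S.r 2 * (S.r 1 * (S.r 3 * S.r 3) * S.r 1) * S.r 2 := by
            rw [h3, mul_one, h1, mul_one, mul_assoc _ (S.r 2) (S.r 2), h2, mul_one]
        _ = d * S.r 3 * S.r 2 * S.r 1 * S.r 2 * S.r 1 * S.r 3 * (S.r 3 * S.r 1) * S.r 2 := by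
            simp only [mul_assoc]
        _ = _ := by rw [← hcomm, hinv]; simp only [mul_assoc]
  · rcases hg with rfl | rfl | rfl
    · exact ⟨_, mul_mem hd hr2, Or.inl rfl⟩
    · exact ⟨d, hd, Or.inr (Or.inr rfl)⟩
    · exact ⟨d, hd, Or.inr (Or.inl (by rw [mul_assoc, h2, mul_one]))⟩
  · rcases hg with rfl | rfl | rfl
    · exact ⟨g, hd, Or.inr (Or.inl rfl)⟩
    · exact ⟨d, hd, Or.inl (by rw [mul_assoc, h3, mul_one])⟩
    · refine ⟨_, mul_mem hd hr2, Or.inr (Or.inr ?_)⟩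
      rw [mul_assoc, mul_assoc, ← mul_assoc (S.r 3), ← hbraid]
      simp only [mul_assoc]

theorem numFacets_le_three_of_conj_sq_mem (hn : 4 ≤ n) (h24 : S.numVertices 2 4 = 3)
    (hsq : S.r 3 * (S.r 1 * S.r 2) ^ 2 * S.r 3 ∈ S.group 1 3) : S.numFacets 1 4 ≤ 3 := by
  rw [← S.ncard_facets_section (by omega) hn S.base]
  have hsub : S.orbit 1 3 '' S.orbit 1 4 S.base ⊆
      {S.orbit 1 3 S.base, S.orbit 1 3 (S.r 3 S.base), S.orbit 1 3 (S.r 3 (S.r 2 S.base))} := by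
    rintro _ ⟨y, hy, rfl⟩
    obtain ⟨g, hg, rfl⟩ := S.mem_orbit.1 hy
    obtain ⟨d, hd, rfl | rfl | rfl⟩ := S.exists_eq_mul_of_conj_sq_mem hn h24 hsq g hg
    · exact Or.inl (S.orbit_eq_iff.2 (S.apply_mem_orbit hd _))
    · exact Or.inr (Or.inl (S.orbit_eq_iff.2 (S.apply_mem_orbit hd _)))
    · exact Or.inr (Or.inr (S.orbit_eq_iff.2 (S.apply_mem_orbit hd _)))
  refine (Set.ncard_le_ncard hsub).trans ((Set.ncard_insert_le _ _).trans ?_)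
  exact Nat.succ_le_succ ((Set.ncard_insert_le _ _).trans (by rw [Set.ncard_singleton]))

theorem six_dvd_of_conj_zpow_mem (hn : 5 ≤ n) (hb3 : 3 ≤ b) (hb : b ≤ n)
    (hthree : S.numVertices 0 b = 3) (h24 : S.numVertices 2 4 = 3) (hp : S.numVertices 1 3 = 6)
    (hF : 3 < S.numFacets 1 4) {m : ℤ}
    (hm : S.r 3 * (S.r 1 * S.r 2) ^ m * (S.r 3)⁻¹ ∈ S.group 1 3) : 6 ∣ m := by
  have hinv : (S.r 3)⁻¹ = S.r 3 := S.r_inv (by omega)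
  rw [← conj_zpow] at hm
  refine six_dvd_of_zpow_mem _ ?_ ?_ ?_ hm <;> rw [conj_pow, hinv]
  · rw [S.pow_eq_one_of_dvd (k := 1) (by omega) hp.dvd, mul_one, S.r_mul_self 3 (by omega)]
    exact one_mem _
  · exact fun h ↦ hF.not_ge (S.numFacets_le_three_of_conj_sq_mem (by omega) h24 h)
  · exact S.conj_cube_notMem hn hb3 hb hthree h24 hp

theorem six_le_numFacets (hn : 6 ≤ n) (hb3 : 3 ≤ b) (hb : b ≤ n)
    (hthree : S.numVertices 0 b = 3) (h24 : S.numVertices 2 4 = 3) (hp : S.numVertices 1 3 = 6)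
    (hF : 3 < S.numFacets 1 4) : 6 ≤ S.numFacets 1 4 := by
  have hfree : S.ActsFreely 1 4 := S.actsFreely_of_add_two_le hn
  have hmem : ∀ k : ℕ, S.r 3 * (S.r 1 * S.r 2) ^ k ∈ S.group 1 4 := fun k ↦
    mul_mem (mem_intervalSubgroup _ (by omega) (by omega)) <| pow_mem
      (mul_mem (mem_intervalSubgroup _ le_rfl (by omega))
        (mem_intervalSubgroup _ (by omega) (by omega))) k
  have hinj : Set.InjOn (fun k ↦ S.orbit 1 3 ((S.r 3 * (S.r 1 * S.r 2) ^ k) S.base))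
      (Finset.range 6) := by
    intro k hk l hl hkl
    rw [Finset.mem_coe, Finset.mem_range] at hk hl
    obtain ⟨d, hd, hdx⟩ := S.mem_orbit.1 (S.orbit_eq_iff.1 hkl)
    have heq : d * (S.r 3 * (S.r 1 * S.r 2) ^ l) = S.r 3 * (S.r 1 * S.r 2) ^ k :=
      hfree.eq (mul_mem (intervalSubgroup_mono _ le_rfl (by omega) hd) (hmem l)) (hmem k) hdx
    have hconj : S.r 3 * (S.r 1 * S.r 2) ^ ((k : ℤ) - l) * (S.r 3)⁻¹ = d := by
      rw [← mul_inv_eq_iff_eq_mul.2 heq.symm, zpow_sub, zpow_natCast, zpow_natCast]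
      group
    have := S.six_dvd_of_conj_zpow_mem (by omega) hb3 hb hthree h24 hp hF (hconj ▸ hd)
    omega
  rw [← S.ncard_facets_section (by omega) (by omega) S.base]
  calc 6 = (Finset.range 6 : Set ℕ).ncard := by rw [Set.ncard_coe_finset, Finset.card_range]
    _ = _ := hinj.ncard_image.symm
    _ ≤ _ := Set.ncard_le_ncard ?_
  rintro _ ⟨k, -, rfl⟩
  exact ⟨_, S.apply_mem_orbit (hmem k) _, rfl⟩

end HexagonalVertexFigure

theorem seventy_two_le_numFlags (hn : 6 ≤ n) (hb4 : 4 ≤ b) (hb : b ≤ n)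
    (hthree : S.numVertices 0 b = 3) (h24 : S.numVertices 2 4 = 3) (hflat : ¬ S.IsFlat 1 4) :
    72 ≤ S.numFlags 1 4 := by
  have hflat' : ¬ S.IsFlat 1 3 := fun h ↦ hflat (h.mono (by omega) le_rfl (by omega) (by omega))
  have hp2 := S.two_dvd_numVertices_one (j := 3) (by omega) (by omega) hb hthree
  have hV2 := S.two_dvd_numVertices_one (j := 4) (by omega) (by omega) hb hthree
  have hlt : S.numVertices 1 3 < S.numVertices 1 4 := S.numVertices_lt_succ (by omega) hflat
  have hp3 : 3 ≤ S.numVertices 1 3 := S.le_numVertices_of_not_isFlat (by omega) (by omega) hflat'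
  have hF4 : 4 ≤ S.numFacets 1 4 := S.le_numFacets_of_not_isFlat (by omega) (by omega) hflat
  have hN13 : S.numFlags 1 3 = 2 * S.numVertices 1 3 := S.numFlags_add_two (by omega)
  have hN24 : S.numFlags 2 4 = 2 * S.numVertices 2 4 := S.numFlags_add_two (by omega)
  have hN : S.numFlags 1 4 = S.numVertices 1 4 * S.numFlags 2 4 :=
    S.numFlags_eq_numVertices_mul (by omega)
  have hN' : S.numFlags 1 4 = S.numFacets 1 4 * S.numFlags 1 3 :=
    S.numFlags_eq_numFacets_mul (by omega)
  have hp4 := S.numVertices_one_three_ne_four (by omega) (by omega) hb hthree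
  have hp6 : S.numVertices 1 3 = 6 → 6 ≤ S.numFacets 1 4 := fun hp ↦
    S.six_le_numFacets hn (by omega) hb hthree h24 hp hF4
  rw [hN24, h24] at hN
  rw [hN13] at hN'
  by_contra! hlt72
  obtain hp | hp : S.numVertices 1 3 = 6 ∨ S.numVertices 1 3 = 8 := by omega
  · have := hp6 hp
    rw [hp] at hN'
    omega
  · rw [hp] at hN'
    omega

end LongReflection

section LowerBound

open scoped Nat

variable [Finite X] [S.IsChiral]

theorem three_mul_factorial_le_numFlags {b : ℕ} (hn : 6 ≤ n) (hb4 : 4 ≤ b) (hb : b ≤ n)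
    (hthree : S.numVertices 0 b = 3) (h24 : S.numVertices 2 4 = 3) (hj : 4 ≤ j) (hjn : j ≤ n)
    (hflat : ¬ S.IsFlat 1 j) : 3 * j ! ≤ S.numFlags 1 j := by
  induction j, hj using Nat.le_induction with
  | base => exact S.seventy_two_le_numFlags hn hb4 hb hthree h24 hflat
  | succ j hj ih =>
    have hfacet : 3 * j ! ≤ S.numFlags 1 j :=
      ih (by omega) fun h ↦ hflat (h.mono (by omega) le_rfl (Nat.le_succ j) hjn)
    have hnum : j + 1 ≤ S.numFacets 1 (j + 1) :=
      S.le_numFacets_of_not_isFlat (by omega) hjn hflat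
    calc 3 * (j + 1)! = (j + 1) * (3 * j !) := by rw [Nat.factorial_succ]; ring
      _ ≤ S.numFacets 1 (j + 1) * S.numFlags 1 j := Nat.mul_le_mul hnum hfacet
      _ = S.numFlags 1 (j + 1) := (S.numFlags_eq_numFacets_mul hjn).symm

theorem mul_le_numVertices_of_isTriangular (hij : i < j) (hj : j ≤ n)
    (hT : S.IsTriangular (i + 1) j) {q : ℕ} (hq : q * (j - i + 1)! ≤ S.numFlags i j) :
    q * (j - i + 1) ≤ S.numVertices i j := by
  have hfigure : S.numFlags (i + 1) j ≤ (j - i)! := by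
    convert hT.numFlags_le S hij hj using 2
    omega
  refine Nat.le_of_mul_le_mul_right (c := (j - i)!) ?_ (Nat.factorial_pos _)
  calc q * (j - i + 1) * (j - i)! = q * (j - i + 1)! := by rw [Nat.factorial_succ, mul_assoc]
    _ ≤ S.numVertices i j * S.numFlags (i + 1) j := hq.trans (S.numFlags_eq_numVertices_mul hj).le
    _ ≤ S.numVertices i j * (j - i)! := Nat.mul_le_mul_left _ hfigure

theorem five_mul_le_numVertices_mul {b : ℕ} (hj : 6 ≤ j) (hjb : j ≤ b) (hb : b ≤ n)
    (hflat : ¬ S.IsFlat 1 j) : 5 * j ≤ S.numVertices 0 b * S.numVertices 1 j := by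
  have hthree : 3 ≤ S.numVertices 0 b :=
    (S.three_le_numVertices (by omega)).trans (S.numVertices_mono (by omega))
  rcases hthree.eq_or_lt with h3 | hfour
  · have := S.le_numVertices_one_of_numVertices_zero_eq_three (by omega) hjb hb h3.symm hflat
    rw [← h3]
    omega
  rcases Nat.succ_le_iff.2 hfour |>.eq_or_lt with h4 | hfive
  · have := S.le_numVertices_one_of_numVertices_zero_le_four (by omega) hjb hb h4.ge hflat
    rw [← h4]
    omega
  · have := S.le_numVertices_of_not_isFlat (by omega) (by omega) hflat
    exact Nat.mul_le_mul hfive (by omega)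

theorem seven_mul_le_numVertices_mul {b : ℕ} (hj : 6 ≤ j) (hjb : j ≤ b) (hb : b ≤ n)
    (hflat : ¬ S.IsFlat 1 j) (hT : S.IsTriangular 2 j) :
    7 * j ≤ S.numVertices 0 b * S.numVertices 1 j := by
  have hfigure {q : ℕ} (hq : q * j ! ≤ S.numFlags 1 j) : q * j ≤ S.numVertices 1 j := by
    have hj1 : j - 1 + 1 = j := by omega
    simpa only [hj1] using
      S.mul_le_numVertices_of_isTriangular (i := 1) (j := j) (q := q) (by omega) (by omega) hT
        (by rwa [hj1])
  by_cases hT1 : S.IsTriangular 1 j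
  · have hmany := S.lt_numVertices_zero_of_isTriangular (by omega) hjb hb hT1
    have := S.le_numVertices_of_not_isFlat (by omega) (by omega) hflat
    exact Nat.mul_le_mul (by omega) (by omega)
  have hthree : 3 ≤ S.numVertices 0 b :=
    (S.three_le_numVertices (by omega)).trans (S.numVertices_mono (by omega))
  rcases hthree.eq_or_lt with h3 | hfour
  · have := hfigure <| S.three_mul_factorial_le_numFlags (by omega) (by omega) hb h3.symm
      (hT 2 le_rfl (by omega)) (by omega) (by omega) hflat
    rw [← h3]
    omega
  · have htwo : 2 * (j - 1 + 1)! ≤ S.numFlags 1 j :=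
      S.two_mul_factorial_le_numFlags (by omega) (by omega) hflat hT1
    rw [Nat.sub_add_cancel (by omega)] at htwo
    calc 7 * j ≤ 4 * (2 * j) := by omega
      _ ≤ S.numVertices 0 b * S.numVertices 1 j := Nat.mul_le_mul hfour (hfigure htwo)

section FactorialBound

variable {m : ℕ} (T : FlagSystem (m + 2) X) [T.IsChiral]

theorem mul_mul_numFlags_le (hm : 1 ≤ m) :
    (T.numVertices 0 (m + 1) * T.numVertices 1 m) *
      (T.numFacets 1 (m + 2) * T.numFacets 2 (m + 1)) * T.numFlags 2 m ≤ T.numFlags 0 (m + 2) := by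
  have hfacets : T.numFacets 1 (m + 2) ≤ T.numFacets 0 (m + 2) :=
    T.numFacets_mono (Nat.zero_le 1) (by omega) le_rfl
  have hvertices : T.numVertices 1 m ≤ T.numVertices 1 (m + 1) := T.numVertices_mono (Nat.le_succ m)
  calc (T.numVertices 0 (m + 1) * T.numVertices 1 m) *
        (T.numFacets 1 (m + 2) * T.numFacets 2 (m + 1)) * T.numFlags 2 m
      = T.numFacets 1 (m + 2) * (T.numVertices 0 (m + 1) *
          (T.numVertices 1 m * (T.numFacets 2 (m + 1) * T.numFlags 2 m))) := by ring
    _ ≤ T.numFacets 0 (m + 2) * (T.numVertices 0 (m + 1) *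
          (T.numVertices 1 (m + 1) * (T.numFacets 2 (m + 1) * T.numFlags 2 m))) := by gcongr
    _ = T.numFlags 0 (m + 2) := by
      rw [T.numFlags_eq_numFacets_mul (i := 0) le_rfl,
        T.numFlags_eq_numVertices_mul (i := 0) (j := m + 2 - 1) (by omega),
        T.numFlags_eq_numVertices_mul (i := 0 + 1) (j := m + 2 - 1) (by omega),
        T.numFlags_eq_numFacets_mul (i := 0 + 1 + 1) (j := m + 2 - 1) (by omega)]
      rfl

theorem le_numFlags_of_not_actsFreely_middle (hm : 6 ≤ m) (hfree : ¬ T.ActsFreely 1 (m + 1)) :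
    48 * m * m ! ≤ T.numFlags 0 (m + 2) := by
  have hlow : T.ActsFreely 1 m := T.actsFreely_of_add_two_le le_rfl
  have hhigh : T.ActsFreely 2 (m + 1) := T.actsFreely_of_two_le le_rfl (by omega)
  have hfacet : ¬ T.IsFlat 1 m := fun hflat ↦
    hfree (T.actsFreely_of_isFlat_facet (by omega) (by omega) hlow hhigh hflat)
  have hfigure : ¬ T.IsFlat 2 (m + 1) := fun hflat ↦
    hfree (T.actsFreely_of_isFlat_vertexFigure (by omega) (by omega) hlow hhigh hflat)
  have hdual : ¬ T.dual.IsFlat 1 m := by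
    rwa [T.dual_isFlat (i := 2) (j := m + 1) (by omega) (by omega) (by omega) (by omega)]
  have hend : T.dual.numVertices 0 (m + 1) = T.numFacets 1 (m + 2) :=
    T.dual_numVertices (by omega) (by omega) (by omega)
  have hmid : T.dual.numVertices 1 m = T.numFacets 2 (m + 1) :=
    T.dual_numVertices (by omega) (by omega) (by omega)
  have hm1 : m - 2 + 1 = m - 1 := by omega
  refine le_trans ?_ (T.mul_mul_numFlags_le (by omega))
  rw [← Nat.mul_factorial_pred (show m ≠ 0 by omega)]
  by_cases hT : T.IsTriangular 2 m
  · have hcore : (m - 1)! ≤ T.numFlags 2 m := hm1 ▸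
      T.factorial_le_numFlags_of_not_isFlat (by omega) (by omega) fun hflat ↦
        hfigure (hflat.mono (by omega) le_rfl (by omega) (by omega))
    have hvertices := T.seven_mul_le_numVertices_mul hm (b := m + 1) (by omega) (by omega) hfacet hT
    have hfacets := T.dual.seven_mul_le_numVertices_mul hm (b := m + 1) (by omega) (by omega) hdual
      ((T.dual_isTriangular (by omega) (by omega)).2 hT)
    rw [hend, hmid] at hfacets
    calc 48 * m * (m * (m - 1)!) ≤ 49 * m * (m * (m - 1)!) := by gcongr; omega
      _ = (7 * m) * (7 * m) * (m - 1)! := by ring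
      _ ≤ _ := by gcongr
  · have hcore : 2 * (m - 1)! ≤ T.numFlags 2 m := hm1 ▸
      T.two_mul_factorial_le_numFlags (by omega) (by omega) (fun hflat ↦
        hfigure (hflat.mono (by omega) le_rfl (by omega) (by omega))) hT
    have hvertices := T.five_mul_le_numVertices_mul hm (b := m + 1) (by omega) (by omega) hfacet
    have hfacets := T.dual.five_mul_le_numVertices_mul hm (b := m + 1) (by omega) (by omega) hdual
    rw [hend, hmid] at hfacets
    calc 48 * m * (m * (m - 1)!) ≤ 50 * m * (m * (m - 1)!) := by gcongr; omega
      _ = (5 * m) * (5 * m) * (2 * (m - 1)!) := by ring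
      _ ≤ _ := by gcongr

theorem mul_two_mul_factorial_le_numFlags_facet (hm : 6 ≤ m) (hridge : ¬ T.IsFlat 0 m)
    (hfigure : ¬ T.IsFlat 1 (m + 1)) (hT : ¬ T.IsTriangular 0 (m + 1)) :
    (m + 1) * (2 * (m + 1)!) ≤ T.numFlags 0 (m + 1) := by
  by_cases hT0 : T.IsTriangular 0 m
  · have hT1 : ¬ T.IsTriangular 1 (m + 1) := fun h ↦ hT (T.isTriangular_of_succ (by omega) hT0 h)
    have hvertices : m + 1 ≤ T.numVertices 0 (m + 1) :=
      (T.le_numVertices_of_not_isFlat (by omega) (by omega) hridge).trans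
        (T.numVertices_mono (Nat.le_succ m))
    rw [T.numFlags_eq_numVertices_mul (by omega)]
    exact Nat.mul_le_mul hvertices
      (T.two_mul_factorial_le_numFlags (by omega) (by omega) hfigure hT1)
  · have hfacets : m + 1 ≤ T.numFacets 0 (m + 1) :=
      (T.le_numFacets_of_not_isFlat (by omega) (by omega) hfigure).trans
        (T.numFacets_mono (Nat.zero_le 1) (by omega) (by omega))
    rw [T.numFlags_eq_numFacets_mul (by omega)]
    exact Nat.mul_le_mul hfacets
      (T.two_mul_factorial_le_numFlags (by omega) (by omega) hridge hT0)

theorem le_numFlags_of_not_actsFreely_facet (hm : 6 ≤ m) (hfree : ¬ T.ActsFreely 0 (m + 1))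
    (hmiddle : T.ActsFreely 1 (m + 1)) : 48 * m * m ! ≤ T.numFlags 0 (m + 2) := by
  have hlow : T.ActsFreely 0 m := T.actsFreely_of_add_two_le le_rfl
  have hridge : ¬ T.IsFlat 0 m := fun hflat ↦
    hfree (T.actsFreely_of_isFlat_facet (by omega) (by omega) hlow hmiddle hflat)
  have hfigure : ¬ T.IsFlat 1 (m + 1) := fun hflat ↦
    hfree (T.actsFreely_of_isFlat_vertexFigure (by omega) (by omega) hlow hmiddle hflat)
  rw [T.numFlags_eq_numFacets_mul (i := 0) le_rfl]
  by_cases hT : T.IsTriangular 0 (m + 1)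
  · have hfacets : m + 2 < T.numFacets 0 (m + 2) := by
      rw [← T.dual_numVertices (a := 0) (b := m + 2) (by omega) (by omega) (by omega)]
      exact T.dual.lt_numVertices_zero_of_isTriangular (by omega) le_rfl le_rfl
        ((T.dual_isTriangular (i := 0) (j := m + 1) (by omega) (by omega)).2 hT)
    have hvertices : m + 1 ≤ T.numVertices 0 (m + 1) :=
      (T.le_numVertices_of_not_isFlat (by omega) (by omega) hridge).trans
        (T.numVertices_mono (Nat.le_succ m))
    have hflags : (m + 1)! ≤ T.numFlags 1 (m + 1) :=
      T.factorial_le_numFlags_of_not_isFlat (by omega) (by omega) hfigure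
    calc 48 * m * m ! ≤ (m + 3) * ((m + 1) * ((m + 1) * m !)) := by
          rw [← mul_assoc, ← mul_assoc]
          exact Nat.mul_le_mul_right _ (Nat.mul_le_mul (by nlinarith) (Nat.le_succ m))
      _ = (m + 3) * ((m + 1) * (m + 1)!) := by rw [Nat.factorial_succ]
      _ ≤ T.numFacets 0 (m + 2) * (T.numVertices 0 (m + 1) * T.numFlags 1 (m + 1)) := by
        gcongr; omega
      _ = T.numFacets 0 (m + 2) * T.numFlags 0 (m + 1) := by
        rw [T.numFlags_eq_numVertices_mul (i := 0) (j := m + 1) (by omega)]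
  · have hfacets : 3 ≤ T.numFacets 0 (m + 2) :=
      (T.three_le_numFacets (by omega)).trans (T.numFacets_mono (Nat.zero_le m) (by omega) le_rfl)
    calc 48 * m * m ! ≤ 6 * (m + 1) * (m + 1) * m ! := Nat.mul_le_mul_right _ (by nlinarith)
      _ = 3 * ((m + 1) * (2 * (m + 1)!)) := by rw [Nat.factorial_succ]; ring
      _ ≤ T.numFacets 0 (m + 2) * T.numFlags 0 (m + 1) :=
        Nat.mul_le_mul hfacets (T.mul_two_mul_factorial_le_numFlags_facet hm hridge hfigure hT)

theorem le_numFlags_of_actsFreely (hm : 6 ≤ m) (hfacet : T.ActsFreely 0 (m + 1))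
    (hfigure : T.ActsFreely 1 (m + 2)) : 48 * m * m ! ≤ T.numFlags 0 (m + 2) := by
  have hfree : ¬ T.ActsFreely 0 (m + 2) := T.not_actsFreely (by omega)
  have hfacet' : ¬ T.IsFlat 0 (m + 1) := fun hflat ↦
    hfree (T.actsFreely_of_isFlat_facet (by omega) le_rfl hfacet hfigure hflat)
  have hfigure' : ¬ T.IsFlat 1 (m + 2) := fun hflat ↦
    hfree (T.actsFreely_of_isFlat_vertexFigure (by omega) le_rfl hfacet hfigure hflat)
  have hvertices : m + 2 ≤ T.numVertices 0 (m + 2) :=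
    (T.le_numVertices_of_not_isFlat (by omega) (by omega) hfacet').trans
      (T.numVertices_mono (Nat.le_succ _))
  have hflags : (m + 2)! ≤ T.numFlags 1 (m + 2) :=
    T.factorial_le_numFlags_of_not_isFlat (by omega) le_rfl hfigure'
  calc 48 * m * m ! ≤ (m + 2) * ((m + 2) * ((m + 1) * m !)) := by
        rw [← mul_assoc, ← mul_assoc]
        exact Nat.mul_le_mul_right _ (by nlinarith)
    _ = (m + 2) * (m + 2)! := by rw [Nat.factorial_succ, Nat.factorial_succ]
    _ ≤ T.numVertices 0 (m + 2) * T.numFlags 1 (m + 2) := Nat.mul_le_mul hvertices hflags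
    _ = T.numFlags 0 (m + 2) := (T.numFlags_eq_numVertices_mul le_rfl).symm

theorem mul_factorial_le_numFlags (hm : 6 ≤ m) : 48 * m * m ! ≤ T.numFlags 0 (m + 2) := by
  by_cases hmiddle : T.ActsFreely 1 (m + 1)
  · by_cases hfacet : T.ActsFreely 0 (m + 1)
    · by_cases hfigure : T.ActsFreely 1 (m + 2)
      · exact T.le_numFlags_of_actsFreely hm hfacet hfigure
      · rw [← T.dual_numFlags (a := 0) (b := m + 2) (by omega) (by omega)]
        refine T.dual.le_numFlags_of_not_actsFreely_facet hm ?_ ?_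
        · rwa [T.dual_actsFreely (i := 1) (j := m + 2) (by omega) (by omega)]
        · rwa [T.dual_actsFreely (i := 1) (j := m + 1) (by omega) (by omega)]
    · exact T.le_numFlags_of_not_actsFreely_facet hm hfacet hmiddle
  · exact T.le_numFlags_of_not_actsFreely_middle hm hmiddle

end FactorialBound

end LowerBound

end FlagSystem

namespace AbstractPolytope

variable {n : ℕ} {P : AbstractPolytope n} {Φ Ψ Θ : Flag P.Face} {F G A B : P.Face} {i j k : ℤ}

theorem rank_mono (h : F ≤ G) : P.rank F ≤ P.rank G :=
  StrictMono.monotone (fun A B ↦ P.rank_strictMono A B) h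

theorem neg_one_le_rank (F : P.Face) : -1 ≤ P.rank F := P.rank_bot ▸ rank_mono (P.bot_le F)

theorem rank_le (F : P.Face) : P.rank F ≤ n := P.rank_top ▸ rank_mono (P.le_top F)

theorem le_of_rank_le (hF : F ∈ Φ) (hG : G ∈ Φ) (h : P.rank F ≤ P.rank G) : F ≤ G := by
  refine (Φ.le_or_le hF hG).elim id fun hGF ↦ ?_
  exact (hGF.eq_or_lt.resolve_right fun hlt ↦ (P.rank_strictMono G F hlt).not_ge h).ge

theorem eq_of_rank_eq (hF : F ∈ Φ) (hG : G ∈ Φ) (h : P.rank F = P.rank G) : F = G :=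
  (le_of_rank_le hF hG h.le).antisymm (le_of_rank_le hG hF h.ge)

theorem lt_of_rank_lt (hF : F ∈ Φ) (hG : G ∈ Φ) (h : P.rank F < P.rank G) : F < G :=
  (le_of_rank_le hF hG h.le).lt_of_ne fun hFG ↦ h.ne (congrArg P.rank hFG)

theorem exists_mem_rank_eq (Φ : Flag P.Face) (F : P.Face) : ∃ G ∈ Φ, P.rank G = P.rank F :=
  P.flag_ranks Φ _ (neg_one_le_rank F) (rank_le F)

/-- Two flags agree off `[i, j)` if they have the same faces in all ranks outside `[i, j)`. -/
def AgreeOff (P : AbstractPolytope n) (i j : ℤ) (Φ Ψ : Flag P.Face) : Prop :=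
  ∀ F : P.Face, P.rank F < i ∨ j ≤ P.rank F → (F ∈ Φ ↔ F ∈ Ψ)

theorem agreeOff_of_forall_mem (h : ∀ F ∈ Φ, P.rank F < i ∨ j ≤ P.rank F → F ∈ Ψ) :
    P.AgreeOff i j Φ Ψ := by
  refine fun F hF ↦ ⟨fun hFΦ ↦ h F hFΦ hF, fun hFΨ ↦ ?_⟩
  obtain ⟨G, hG, hrank⟩ := exists_mem_rank_eq Φ F
  rwa [← eq_of_rank_eq (h G hG (hrank ▸ hF)) hFΨ hrank]

theorem AgreeOff.symm (h : P.AgreeOff i j Φ Ψ) : P.AgreeOff i j Ψ Φ := fun F hF ↦ (h F hF).symm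

theorem AgreeOff.trans (h : P.AgreeOff i j Φ Ψ) (h' : P.AgreeOff i j Ψ Θ) : P.AgreeOff i j Φ Θ :=
  fun F hF ↦ (h F hF).trans (h' F hF)

theorem AgreeOff.mono {i' j' : ℤ} (h : P.AgreeOff i' j' Φ Ψ) (hi : i ≤ i') (hj : j' ≤ j) :
    P.AgreeOff i j Φ Ψ :=
  fun F hF ↦ h F (by omega)

theorem AgreeOff.eq (h : P.AgreeOff i j Φ Ψ) (hij : j ≤ i) : Φ = Ψ :=
  SetLike.ext fun F ↦ h F (by omega)

theorem eq_of_forall_mem (h : ∀ F ∈ Φ, F ∈ Ψ) : Φ = Ψ :=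
  (agreeOff_of_forall_mem (i := 0) (j := 0) fun F hF _ ↦ h F hF).eq le_rfl

theorem AgreeOff.eq_of_mem (h : P.AgreeOff (P.rank F) (P.rank F + 1) Φ Ψ) (hΦ : F ∈ Φ)
    (hΨ : F ∈ Ψ) : Φ = Ψ := by
  refine eq_of_forall_mem fun G hG ↦ ?_
  obtain hrank | hrank := eq_or_ne (P.rank G) (P.rank F)
  · rwa [eq_of_rank_eq hG hΦ hrank]
  · exact (h G (by omega)).1 hG

theorem agreeOff_zero_rank (Φ Ψ : Flag P.Face) : P.AgreeOff 0 n Φ Ψ := by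
  refine agreeOff_of_forall_mem fun F _ hrank ↦ Flag.mem_iff_forall_le_or_ge.2 fun G _ ↦ ?_
  have hbot : P.bot = F ∨ -1 < P.rank F :=
    (P.bot_le F).eq_or_lt.imp_right fun h ↦ P.rank_bot ▸ P.rank_strictMono _ _ h
  have htop : F = P.top ∨ P.rank F < n :=
    (P.le_top F).eq_or_lt.imp_right fun h ↦ P.rank_top ▸ P.rank_strictMono _ _ h
  obtain hrank | hrank := hrank
  · exact .inl (hbot.resolve_right (by omega) ▸ P.bot_le G)
  · exact .inr (htop.resolve_right (by omega) ▸ P.le_top G)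

theorem exists_splice (hΦ : F ∈ Φ) (hΨ : F ∈ Ψ) :
    ∃ Θ : Flag P.Face, P.AgreeOff (P.rank F + 1) (n + 1) Φ Θ ∧ P.AgreeOff (-1) (P.rank F) Θ Ψ := by
  have hchain : IsChain (· ≤ ·) ({A | A ∈ Φ ∧ A ≤ F} ∪ {B | B ∈ Ψ ∧ F ≤ B}) := by
    rintro A (⟨hA, hAF⟩ | ⟨hA, hFA⟩) B (⟨hB, hBF⟩ | ⟨hB, hFB⟩) -
    exacts [Φ.le_or_le hA hB, .inl (hAF.trans hFB), .inr (hBF.trans hFA), Ψ.le_or_le hA hB]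
  obtain ⟨Θ, hΘ⟩ := hchain.exists_subset_flag
  have hrange (A : P.Face) := And.intro (neg_one_le_rank A) (rank_le A)
  refine ⟨Θ, agreeOff_of_forall_mem fun A hA hrank ↦ ?_,
    .symm (agreeOff_of_forall_mem fun A hA hrank ↦ ?_)⟩ <;> have := hrange A
  · exact hΘ (.inl ⟨hA, le_of_rank_le hA hΦ (by omega)⟩)
  · exact hΘ (.inr ⟨hA, le_of_rank_le hΨ hA (by omega)⟩)

theorem exists_flag_through (hF : F ∈ Φ) (hG : G ∈ Φ) (hFA : F < A) (hAG : A < G) (hFB : F < B)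
    (hBG : B < G) (hAB : A ≤ B ∨ B ≤ A) :
    ∃ Ψ : Flag P.Face, P.AgreeOff (P.rank F + 1) (P.rank G) Φ Ψ ∧ A ∈ Ψ ∧ B ∈ Ψ := by
  have comparable {C D : P.Face} (hFC : F < C) (hCG : C < G) (hD : D ≤ F ∨ G ≤ D) :
      C ≤ D ∨ D ≤ C :=
    hD.symm.imp hCG.le.trans fun h ↦ h.trans hFC.le
  have hchain : IsChain (· ≤ ·) (insert A (insert B {D | D ∈ Φ ∧ (D ≤ F ∨ G ≤ D)})) := by
    refine ((Φ.chain_le.mono fun D hD ↦ hD.1).insert fun D hD _ ↦ comparable hFB hBG hD.2).insert ?_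
    rintro D (rfl | hD) -
    exacts [hAB, comparable hFA hAG hD.2]
  obtain ⟨Ψ, hΨ⟩ := hchain.exists_subset_flag
  refine ⟨Ψ, agreeOff_of_forall_mem fun D hD hrank ↦ hΨ (.inr (.inr ⟨hD, ?_⟩)), hΨ (.inl rfl),
    hΨ (.inr (.inl rfl))⟩
  exact hrank.imp (fun h ↦ le_of_rank_le hD hF (by omega)) (le_of_rank_le hG hD)

theorem existsUnique_adjacent {i : ℕ} (hi : i < n) (Φ : Flag P.Face) :
    ∃! Ψ, Ψ ≠ Φ ∧ P.AgreeOff i (i + 1) Φ Ψ := by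
  obtain ⟨F, hF, hrankF⟩ := P.flag_ranks Φ (i - 1) (by omega) (by omega)
  obtain ⟨G, hG, hrankG⟩ := P.flag_ranks Φ (i + 1) (by omega) (by omega)
  obtain ⟨H, hH, hrankH⟩ := P.flag_ranks Φ i (by omega) (by omega)
  have hdiamond := P.diamond F G (lt_of_rank_lt hF hG (by omega)) (by omega)
  obtain ⟨⟨A, hFA, hAG⟩, hAH, hunique⟩ := (Nat.card_eq_two_iff'
    ⟨H, lt_of_rank_lt hF hH (by omega), lt_of_rank_lt hH hG (by omega)⟩).1 hdiamond
  have hrankA : P.rank A = i := by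
    have := P.rank_strictMono F A hFA
    have := P.rank_strictMono A G hAG
    omega
  obtain ⟨Ψ, hΦΨ, hA, -⟩ := exists_flag_through hF hG hFA hAG hFA hAG (.inl le_rfl)
  rw [hrankF, hrankG, sub_add_cancel] at hΦΨ
  refine ⟨Ψ, ⟨?_, hΦΨ⟩, fun Θ ⟨hne, hΦΘ⟩ ↦ ?_⟩
  · rintro rfl
    exact hAH (Subtype.ext (eq_of_rank_eq hA hH (hrankA.trans hrankH.symm)))
  obtain ⟨B, hB, hrankB⟩ := P.flag_ranks Θ i (by omega) (by omega)
  have hFB : F < B := lt_of_rank_lt ((hΦΘ F (by omega)).1 hF) hB (by omega)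
  have hBG : B < G := lt_of_rank_lt hB ((hΦΘ G (by omega)).1 hG) (by omega)
  have hBH : B ≠ H := by
    rintro rfl
    rw [← hrankB] at hΦΘ
    exact hne (hΦΘ.eq_of_mem hH hB).symm
  obtain rfl : B = A :=
    congrArg Subtype.val (hunique ⟨B, hFB, hBG⟩ fun h ↦ hBH (congrArg Subtype.val h))
  have hΘΨ : P.AgreeOff i (i + 1) Θ Ψ := hΦΘ.symm.trans hΦΨ
  rw [← hrankB] at hΘΨ
  exact hΘΨ.eq_of_mem hB hA

/-- The flag differing from `Φ` only in its face of rank `i`; it is `Φ` itself if `n ≤ i`. -/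
noncomputable def adjacentFlag (i : ℕ) (Φ : Flag P.Face) : Flag P.Face :=
  if hi : i < n then (existsUnique_adjacent hi Φ).choose else Φ

section AdjacentFlag

variable {i j : ℕ}

theorem adjacentFlag_spec (hi : i < n) (Φ : Flag P.Face) :
    adjacentFlag i Φ ≠ Φ ∧ P.AgreeOff i (i + 1) Φ (adjacentFlag i Φ) := by
  rw [adjacentFlag, dif_pos hi]
  exact (existsUnique_adjacent hi Φ).choose_spec.1

theorem adjacentFlag_ne (hi : i < n) (Φ : Flag P.Face) : adjacentFlag i Φ ≠ Φ :=
  (adjacentFlag_spec hi Φ).1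

theorem agreeOff_adjacentFlag (i : ℕ) (Φ : Flag P.Face) :
    P.AgreeOff i (i + 1) Φ (adjacentFlag i Φ) := by
  by_cases hi : i < n
  · exact (adjacentFlag_spec hi Φ).2
  · rw [adjacentFlag, dif_neg hi]
    exact agreeOff_of_forall_mem fun _ hF _ ↦ hF

theorem eq_adjacentFlag (hi : i < n) (hne : Ψ ≠ Φ) (h : P.AgreeOff i (i + 1) Φ Ψ) :
    Ψ = adjacentFlag i Φ :=
  (existsUnique_adjacent hi Φ).unique ⟨hne, h⟩ (adjacentFlag_spec hi Φ)

theorem adjacentFlag_involutive (i : ℕ) :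
    Function.Involutive (adjacentFlag i : Flag P.Face → Flag P.Face) := by
  intro Φ
  by_cases hi : i < n
  · exact (eq_adjacentFlag hi (adjacentFlag_ne hi Φ).symm (agreeOff_adjacentFlag i Φ).symm).symm
  · rw [adjacentFlag, dif_neg hi, adjacentFlag, dif_neg hi]

-- Both sides are the flag spliced at rank `i + 1` from the two adjacent flags of `Φ`.
theorem adjacentFlag_comm (hij : i + 2 ≤ j) (hj : j < n) (Φ : Flag P.Face) :
    adjacentFlag i (adjacentFlag j Φ) = adjacentFlag j (adjacentFlag i Φ) := by
  have hi : i < n := by omega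
  obtain ⟨F, hF, hrank⟩ := P.flag_ranks Φ (i + 1) (by omega) (by omega)
  have hΦi := agreeOff_adjacentFlag i Φ
  have hΦj := agreeOff_adjacentFlag j Φ
  obtain ⟨Θ, hiΘ, hΘj⟩ := exists_splice ((hΦi F (by omega)).1 hF) ((hΦj F (by omega)).1 hF)
  rw [hrank] at hiΘ hΘj
  have hΘi : P.AgreeOff i (i + 1) (adjacentFlag j Φ) Θ := fun G hG ↦ by
    obtain hG | hG := hG
    · exact ((hΦj G (by omega)).symm.trans (hΦi G (by omega))).trans (hiΘ G (by omega))
    · exact (hΘj G (by omega)).symm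
  have hΘj' : P.AgreeOff j (j + 1) (adjacentFlag i Φ) Θ := fun G hG ↦ by
    obtain hG | hG : P.rank G ≤ i + 1 ∨ i + 1 < P.rank G := le_or_gt _ _
    · exact hiΘ G (by omega)
    · exact ((hΦi G (by omega)).symm.trans (hΦj G (by omega))).trans (hΘj G (by omega)).symm
  rw [← eq_adjacentFlag hi ?_ hΘi, ← eq_adjacentFlag hj ?_ hΘj']
  · rintro rfl
    refine adjacentFlag_ne hj Φ (AgreeOff.eq (i := j) (j := j) (fun G hG ↦ ?_) le_rfl)
    obtain hG | hG := hG
    · exact (hΦj G (by omega)).symm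
    · exact (hΘj G (by omega)).symm.trans (hΦi G (by omega)).symm
  · rintro rfl
    refine adjacentFlag_ne hi Φ (AgreeOff.eq (i := i + 1) (j := i + 1) (fun G hG ↦ ?_) le_rfl)
    obtain hG | hG := hG
    · exact (hiΘ G (by omega)).trans (hΦj G (by omega)).symm
    · exact (hΦi G (by omega)).symm

end AdjacentFlag

/-- Changing the face of rank `i`, as a permutation of the flags. -/
noncomputable def adjacentPerm (i : ℕ) : Perm (Flag P.Face) :=
  (adjacentFlag_involutive i).toPerm

/-- The flags reachable from `Φ` by changing faces of ranks in `[i, j)` one at a time. -/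
abbrev flagOrbit (i j : ℕ) (Φ : Flag P.Face) : Set (Flag P.Face) :=
  MulAction.orbit (intervalSubgroup adjacentPerm i j : Subgroup (Perm (Flag P.Face))) Φ

section Connectivity

variable {i j : ℕ}

theorem adjacentPerm_mul_self (i : ℕ) :
    adjacentPerm i * adjacentPerm i = (1 : Perm (Flag P.Face)) :=
  Equiv.ext (adjacentFlag_involutive i)

theorem mem_flagOrbit_trans (h : Ψ ∈ flagOrbit i j Φ) (h' : Θ ∈ flagOrbit i j Ψ) :
    Θ ∈ flagOrbit i j Φ := by
  have hΨΦ : flagOrbit i j Ψ = flagOrbit i j Φ := MulAction.orbit_eq_iff.2 h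
  rwa [hΨΦ] at h'

theorem flagOrbit_mono {i' j' : ℕ} (hi : i ≤ i') (hj : j' ≤ j) (Φ : Flag P.Face) :
    flagOrbit i' j' Φ ⊆ flagOrbit i j Φ := by
  rintro _ ⟨⟨g, hg⟩, rfl⟩
  exact ⟨⟨g, intervalSubgroup_mono _ hi hj hg⟩, rfl⟩

theorem agreeOff_of_mem_flagOrbit (h : Ψ ∈ flagOrbit i j Φ) : P.AgreeOff i j Φ Ψ := by
  obtain ⟨⟨g, hg⟩, rfl⟩ := h
  refine intervalSubgroup_induction_left (p := fun g ↦ P.AgreeOff i j Φ (g Φ))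
    (fun k _ _ ↦ adjacentPerm_mul_self k) (fun F _ ↦ Iff.rfl) (fun k hik hkj g _ ih ↦ ?_) g hg
  exact ih.trans ((agreeOff_adjacentFlag k (g Φ)).mono (by omega) (by omega))

theorem mem_flagOrbit_of_common_face (hj : j ≤ n)
    (ih : ∀ i' j', j' ≤ n → j' - i' < j - i → ∀ Φ Ψ : Flag P.Face, P.AgreeOff i' j' Φ Ψ →
      Ψ ∈ flagOrbit i' j' Φ)
    (h : P.AgreeOff i j Φ Ψ) (hΦ : F ∈ Φ) (hΨ : F ∈ Ψ) (hiF : i ≤ P.rank F) (hFj : P.rank F < j) :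
    Ψ ∈ flagOrbit i j Φ := by
  obtain ⟨Θ, hΦΘ, hΘΨ⟩ := exists_splice hΦ hΨ
  obtain ⟨k, hk⟩ := Int.eq_ofNat_of_zero_le ((Int.natCast_nonneg i).trans hiF)
  rw [hk] at hΦΘ hΘΨ hiF hFj
  have hupper : P.AgreeOff (k + 1 : ℕ) j Φ Θ := fun G hG ↦ by
    obtain hG | hG := hG
    · exact hΦΘ G (.inl (mod_cast hG))
    · exact (h G (.inr hG)).trans (hΘΨ G (by omega)).symm
  have hlower : P.AgreeOff i k Θ Ψ := fun G hG ↦ by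
    obtain hG | hG := hG
    · exact (hΦΘ G (by omega)).symm.trans (h G (.inl hG))
    · exact hΘΨ G (.inr hG)
  exact mem_flagOrbit_trans
    (flagOrbit_mono (by omega) le_rfl Φ (ih (k + 1) j hj (by omega) Φ Θ hupper))
    (flagOrbit_mono le_rfl (by omega) Θ (ih i k (by omega) (by omega) Θ Ψ hlower))

theorem mem_flagOrbit_of_strongly_connected (hij : i + 2 ≤ j) (hj : j ≤ n)
    (ih : ∀ i' j', j' ≤ n → j' - i' < j - i → ∀ Φ Ψ : Flag P.Face, P.AgreeOff i' j' Φ Ψ →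
      Ψ ∈ flagOrbit i' j' Φ)
    (h : P.AgreeOff i j Φ Ψ) : Ψ ∈ flagOrbit i j Φ := by
  obtain ⟨F, hF, hrankF⟩ := P.flag_ranks Φ (i - 1) (by omega) (by omega)
  obtain ⟨G, hG, hrankG⟩ := P.flag_ranks Φ j (by omega) (by omega)
  obtain ⟨A, hA, hrankA⟩ := P.flag_ranks Φ i (by omega) (by omega)
  obtain ⟨B, hB, hrankB⟩ := P.flag_ranks Ψ i (by omega) (by omega)
  have hpath := P.strongly_connected F G (lt_of_rank_lt hF hG (by omega)) (by omega) A B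
    (lt_of_rank_lt hF hA (by omega)) (lt_of_rank_lt hA hG (by omega))
    (lt_of_rank_lt ((h F (by omega)).1 hF) hB (by omega))
    (lt_of_rank_lt hB ((h G (by omega)).1 hG) (by omega))
  clear hrankB
  induction hpath generalizing Ψ with
  | refl => exact mem_flagOrbit_of_common_face hj ih h hA hB (by omega) (by omega)
  | @tail C D _ hstep ih' =>
    obtain ⟨hFC, hCG, hFD, hDG, hCD⟩ := hstep
    obtain ⟨Θ, hΦΘ, hC, hD⟩ := exists_flag_through hF hG hFC hCG hFD hDG hCD
    rw [hrankF, hrankG, sub_add_cancel] at hΦΘ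
    have := P.rank_strictMono F D hFD
    have := P.rank_strictMono D G hDG
    exact mem_flagOrbit_trans (ih' hΦΘ hC)
      (mem_flagOrbit_of_common_face hj ih (hΦΘ.symm.trans h) hD hB (by omega) (by omega))

theorem mem_flagOrbit_iff (hj : j ≤ n) : Ψ ∈ flagOrbit i j Φ ↔ P.AgreeOff i j Φ Ψ := by
  refine ⟨agreeOff_of_mem_flagOrbit, fun h ↦ ?_⟩
  induction hd : j - i using Nat.strong_induction_on generalizing i j Φ Ψ with
  | _ d ih =>
    obtain hij | hij | hij : j ≤ i ∨ j = i + 1 ∨ i + 2 ≤ j := by omega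
    · exact h.eq (mod_cast hij) ▸ MulAction.mem_orbit_self Φ
    · subst hij
      by_cases hne : Ψ = Φ
      · exact hne ▸ MulAction.mem_orbit_self Ψ
      rw [eq_adjacentFlag hj hne (mod_cast h)]
      exact ⟨⟨adjacentPerm i, mem_intervalSubgroup _ le_rfl i.lt_succ_self⟩, rfl⟩
    · exact mem_flagOrbit_of_strongly_connected hij hj
        (fun i' j' hj' hlt Φ Ψ h' ↦ ih (j' - i') (hd ▸ hlt) hj' h' rfl) h

end Connectivity

section Automorphism

theorem rank_le_rank_orderIso (e : P.Face ≃o P.Face) (F : P.Face) : P.rank F ≤ P.rank (e F) := by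
  obtain ⟨Φ, hΦ⟩ := Flag.exists_mem F
  have hmono (k : ℤ) (hk : -1 ≤ k) : ∀ A ∈ Φ, P.rank A = k → k ≤ P.rank (e A) := by
    induction k, hk using Int.leInduction with
    | base => exact fun A _ _ ↦ neg_one_le_rank (e A)
    | succ k hk ih =>
      intro A hA hrank
      obtain ⟨B, hB, hrankB⟩ := P.flag_ranks Φ k hk (by have := rank_le A; omega)
      have hlt := P.rank_strictMono _ _ (e.strictMono (lt_of_rank_lt hB hA (by omega)))
      have := ih B hB hrankB
      omega
  exact hmono _ (neg_one_le_rank F) F hΦ rfl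

theorem rank_orderIso (e : P.Face ≃o P.Face) (F : P.Face) : P.rank (e F) = P.rank F :=
  le_antisymm (by simpa using rank_le_rank_orderIso e.symm (e F)) (rank_le_rank_orderIso e F)

theorem mem_map_iff (e : P.Face ≃o P.Face) : e F ∈ Flag.map e Φ ↔ F ∈ Φ :=
  e.injective.mem_set_image

theorem AgreeOff.map (h : P.AgreeOff i j Φ Ψ) (e : P.Face ≃o P.Face) :
    P.AgreeOff i j (Flag.map e Φ) (Flag.map e Ψ) := by
  intro F hF
  obtain ⟨F, rfl⟩ := e.surjective F
  rw [rank_orderIso] at hF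
  rw [mem_map_iff, mem_map_iff, h F hF]

theorem map_adjacentFlag {i : ℕ} (hi : i < n) (e : P.Face ≃o P.Face) (Φ : Flag P.Face) :
    Flag.map e (adjacentFlag i Φ) = adjacentFlag i (Flag.map e Φ) :=
  eq_adjacentFlag hi ((Flag.map e).injective.ne (adjacentFlag_ne hi Φ))
    ((agreeOff_adjacentFlag i Φ).map e)

variable {f : Perm (Flag P.Face)}

theorem AgreeOff.apply (hf : ∀ i < n, Commute f (adjacentPerm i)) (h : P.AgreeOff i j Φ Ψ) :
    P.AgreeOff i j (f Φ) (f Ψ) := by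
  have h' : P.AgreeOff i.toNat (min j.toNat n : ℕ) Φ Ψ := by
    intro F hF
    by_cases hrank : P.rank F < i ∨ j ≤ P.rank F
    · exact h F hrank
    · exact agreeOff_zero_rank Φ Ψ F (by omega)
  obtain ⟨⟨g, hg⟩, rfl⟩ := (mem_flagOrbit_iff (min_le_right _ _)).2 h'
  have hcomm : Commute f g := commute_of_mem_intervalSubgroup (fun k _ hk ↦ hf k (by omega)) hg
  intro F hF
  have hagree : P.AgreeOff i.toNat (min j.toNat n : ℕ) (f Φ) (g (f Φ)) :=
    agreeOff_of_mem_flagOrbit ⟨⟨g, hg⟩, rfl⟩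
  change F ∈ f Φ ↔ F ∈ (f * g) Φ
  rw [hcomm.eq]
  exact hagree F (by omega)

theorem mem_apply_of_commute (hf : ∀ i < n, Commute f (adjacentPerm i)) (hΦ : F ∈ Φ) (hΨ : F ∈ Ψ)
    (hG : G ∈ f Φ) (hrank : P.rank G = P.rank F) : G ∈ f Ψ := by
  obtain ⟨Θ, hΦΘ, hΘΨ⟩ := exists_splice hΦ hΨ
  exact (hΘΨ.apply hf G (by omega)).1 ((hΦΘ.apply hf G (by omega)).1 hG)

theorem exists_faceMap_of_commute (hf : ∀ i < n, Commute f (adjacentPerm i)) :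
    ∃ φ : P.Face → P.Face, Monotone φ ∧ (∀ F, P.rank (φ F) = P.rank F) ∧
      ∀ F Ψ, F ∈ Ψ → φ F ∈ f Ψ := by
  choose Φ hΦ using Flag.exists_mem (α := P.Face)
  choose φ hφ hrank using fun F ↦ exists_mem_rank_eq (f (Φ F)) F
  have hmem (F Ψ) (hΨ : F ∈ Ψ) : φ F ∈ f Ψ := mem_apply_of_commute hf (hΦ F) hΨ (hφ F) (hrank F)
  refine ⟨φ, fun F G hFG ↦ ?_, hrank, hmem⟩
  obtain ⟨Ψ, hF, hG⟩ := Flag.exists_mem_mem hFG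
  exact le_of_rank_le (hmem F Ψ hF) (hmem G Ψ hG) (by rw [hrank, hrank]; exact rank_mono hFG)

theorem exists_orderIso_of_commute (hf : ∀ i < n, Commute f (adjacentPerm i)) :
    ∃ e : P.Face ≃o P.Face, ∀ Φ, Flag.map e Φ = f Φ := by
  obtain ⟨φ, hφmono, hφrank, hφ⟩ := exists_faceMap_of_commute hf
  obtain ⟨ψ, hψmono, hψrank, hψ⟩ := exists_faceMap_of_commute fun i hi ↦ (hf i hi).inv_left
  have hψφ (F : P.Face) : ψ (φ F) = F := by
    obtain ⟨Φ, hΦ⟩ := Flag.exists_mem F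
    have hmem : ψ (φ F) ∈ f⁻¹ (f Φ) := hψ _ _ (hφ F Φ hΦ)
    rw [Perm.inv_def, Equiv.symm_apply_apply] at hmem
    exact eq_of_rank_eq hmem hΦ (by rw [hψrank, hφrank])
  have hφψ (F : P.Face) : φ (ψ F) = F := by
    obtain ⟨Φ, hΦ⟩ := Flag.exists_mem F
    have hmem : φ (ψ F) ∈ f (f⁻¹ Φ) := hφ _ _ (hψ F Φ hΦ)
    rw [Perm.inv_def, Equiv.apply_symm_apply] at hmem
    exact eq_of_rank_eq hmem hΦ (by rw [hφrank, hψrank])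
  let e : P.Face ≃o P.Face := Equiv.toOrderIso ⟨φ, ψ, hψφ, hφψ⟩ hφmono hψmono
  refine ⟨e, fun Φ ↦ eq_of_forall_mem ?_⟩
  rintro _ ⟨F, hF, rfl⟩
  exact hφ F Φ hF

end Automorphism

section FlagSystem

variable {i : ℕ}

/-- The flags of an abstract polytope with the operations of passing to the adjacent flags. -/
noncomputable def flagSystem (P : AbstractPolytope n) (Φ₀ : Flag P.Face) :
    FlagSystem n (Flag P.Face) where
  r := adjacentPerm
  base := Φ₀
  r_mul_self i _ := adjacentPerm_mul_self i
  r_ne _ hi Φ := adjacentFlag_ne hi Φ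
  comm _ _ hij hj := Equiv.ext (adjacentFlag_comm hij hj)
  inter i j i' j' hj hj' Φ Ψ := by
    rintro ⟨h, h'⟩
    have hij := (mem_flagOrbit_iff hj).1 h
    have hij' := (mem_flagOrbit_iff hj').1 h'
    refine (mem_flagOrbit_iff (by omega)).2 fun F hF ↦ ?_
    obtain hrank | hrank : (P.rank F < i ∨ j ≤ P.rank F) ∨ (P.rank F < i' ∨ j' ≤ P.rank F) := by
      omega
    exacts [hij F hrank, hij' F hrank]
  trans Φ Ψ := (mem_flagOrbit_iff le_rfl).2 (agreeOff_zero_rank Φ Ψ)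

variable {Φ₀ : Flag P.Face}

theorem flagSystem_sameOrbit_iff :
    (P.flagSystem Φ₀).SameOrbit Φ Ψ ↔ P.SameOrbit Φ Ψ := by
  constructor
  · rintro ⟨f, hf, rfl⟩
    obtain ⟨e, he⟩ := exists_orderIso_of_commute hf
    exact ⟨e, congrArg SetLike.coe (he Φ)⟩
  · rintro ⟨e, he⟩
    exact ⟨Flag.map e, fun i hi ↦ Equiv.ext (map_adjacentFlag hi e), SetLike.coe_injective he⟩

theorem numFlags_flagSystem : (P.flagSystem Φ₀).numFlags 0 n = P.numFlags := by
  rw [FlagSystem.numFlags, numFlags, ← Set.ncard_univ]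
  exact congrArg Set.ncard (Set.eq_univ_of_forall ((P.flagSystem Φ₀).trans Φ₀))

theorem AgreeOff.coe_diff_eq_singleton (h : P.AgreeOff (P.rank F) (P.rank F + 1) Φ Ψ)
    (hΦ : F ∈ Φ) (hne : Φ ≠ Ψ) : (Φ : Set P.Face) \ Ψ = {F} := by
  ext G
  simp only [Set.mem_sdiff, SetLike.mem_coe, Set.mem_singleton_iff]
  constructor
  · rintro ⟨hGΦ, hGΨ⟩
    by_contra hGF
    have hrank : P.rank G ≠ P.rank F := fun hrank ↦ hGF (eq_of_rank_eq hGΦ hΦ hrank)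
    exact hGΨ ((h G (by omega)).1 hGΦ)
  · rintro rfl
    exact ⟨hΦ, fun hΨ ↦ hne (h.eq_of_mem hΦ hΨ)⟩

theorem adjacentFlags_adjacentFlag (hi : i < n) (Φ : Flag P.Face) :
    P.AdjacentFlags Φ (adjacentFlag i Φ) := by
  have ncard_diff {Ψ Θ : Flag P.Face} (h : P.AgreeOff i (i + 1) Ψ Θ) (hne : Ψ ≠ Θ) :
      ((Ψ : Set P.Face) \ Θ).ncard = 1 := by
    obtain ⟨F, hF, hrank⟩ := P.flag_ranks Ψ i (by omega) (by omega)
    rw [← hrank] at h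
    rw [h.coe_diff_eq_singleton hF hne, Set.ncard_singleton]
  have hne := adjacentFlag_ne hi Φ
  have hagree := agreeOff_adjacentFlag i Φ
  exact ⟨hne.symm, ncard_diff hagree hne.symm, ncard_diff hagree.symm hne⟩

theorem IsChiral.flagSystem (h : P.IsChiral) (Φ₀ : Flag P.Face) :
    (P.flagSystem Φ₀).IsChiral := by
  have hadj (i : ℕ) (hi : i < n) (Φ : Flag P.Face) :
      ¬ (P.flagSystem Φ₀).SameOrbit Φ (adjacentFlag i Φ) :=
    fun hΦ ↦ h.2 _ _ (adjacentFlags_adjacentFlag hi Φ) (flagSystem_sameOrbit_iff.1 hΦ)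
  refine ⟨hadj, fun i hi Φ Ψ ↦ ?_⟩
  obtain ⟨⟨Φ₁, Φ₂, -, horbits⟩, -⟩ := h
  simp only [← flagSystem_sameOrbit_iff (Φ₀ := Φ₀)] at horbits
  obtain hΦ | hΦ := horbits Φ <;> obtain hΨ | hΨ := horbits Ψ <;>
    obtain hΨ' | hΨ' := horbits (adjacentFlag i Ψ)
  all_goals first
    | exact absurd (hΨ.trans hΨ'.symm) (hadj i hi Ψ)
    | exact .inl (hΦ.trans hΨ.symm)
    | exact .inr (hΦ.trans hΨ'.symm)

end FlagSystem

end AbstractPolytope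

/-- For every `n ≥ 8`, every finite chiral `n`-polytope has at
least `48 * (n-2) * (n-2)!` flags. -/
theorem smallest_chiral_of_rank_ge_eight
    (n : ℕ) (hn : 8 ≤ n) (P : AbstractPolytope n) (hfin : Finite P.Face)
    (hchiral : P.IsChiral) :
    48 * (n - 2) * Nat.factorial (n - 2) ≤ P.numFlags := by
  obtain ⟨m, rfl⟩ := Nat.exists_eq_add_of_le' ((by norm_num : 2 ≤ 8).trans hn)
  obtain ⟨Φ₀, -⟩ := hchiral.1
  have : Finite (Flag P.Face) := Finite.of_injective _ SetLike.coe_injective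
  have : (P.flagSystem Φ₀).IsChiral := hchiral.flagSystem Φ₀
  rw [Nat.add_sub_cancel, ← AbstractPolytope.numFlags_flagSystem (Φ₀ := Φ₀)]
  exact (P.flagSystem Φ₀).mul_factorial_le_numFlags (by omega)
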